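/- arXiv:1202.5605 — 3 statements merged into one kernel-verified Lean document; each statement's English description precedes it below -/
import Mathlib

section
/- Let (R, m, k) be a d-dimensional Cohen-Macaulay local ring and let M be a nonzero finitely generated R-module of depth t. Then Ω^t k belongs to res(M ⊕ Ω^n k) for every integer n ≥ 0. -/
universe u

open CategoryTheory

namespace ResolvPaper

variable (R : Type u) [CommRing R]

/-- `IsSES f g` means `0 → A → B → C → 0` is a short exact sequence. -/
def IsSES {R : Type u} [CommRing R] {A B C : Type u} [AddCommGroup A] [Module R A]
    [AddCommGroup B] [Module R B] [AddCommGroup C] [Module R C]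
    (f : A →ₗ[R] B) (g : B →ₗ[R] C) : Prop :=
  Function.Injective f ∧ Function.Surjective g ∧ LinearMap.range f = LinearMap.ker g

/-- A resolving subcategory of `mod R`, viewed as a set of bundled modules
closed under isomorphism, containing the finitely generated projective modules, and closed
under direct summands, extensions and syzygies. -/
structure IsResolving (𝒳 : Set (ModuleCat.{u} R)) : Prop where
  fg : ∀ M ∈ 𝒳, Module.Finite R M
  iso_closed : ∀ M N : ModuleCat.{u} R, Nonempty (M ≃ₗ[R] N) → M ∈ 𝒳 → N ∈ 𝒳
  proj_mem : ∀ M : ModuleCat.{u} R, Module.Finite R M → Module.Projective R M → M ∈ 𝒳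
  summand_closed : ∀ M N : ModuleCat.{u} R, ModuleCat.of R (↥M × ↥N) ∈ 𝒳 → M ∈ 𝒳
  ext_closed : ∀ (A B C : ModuleCat.{u} R) (f : A →ₗ[R] B) (g : B →ₗ[R] C),
    IsSES f g → A ∈ 𝒳 → C ∈ 𝒳 → B ∈ 𝒳
  syzygy_closed : ∀ (K P M : ModuleCat.{u} R) (f : K →ₗ[R] P) (g : P →ₗ[R] M),
    IsSES f g → Module.Finite R K → Module.Finite R P → Module.Projective R P →
    M ∈ 𝒳 → K ∈ 𝒳

/-- The resolving closure: the smallest resolving subcategory containing `S`. -/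
def resClosure (S : Set (ModuleCat.{u} R)) : Set (ModuleCat.{u} R) :=
  ⋂₀ {𝒳 | IsResolving R 𝒳 ∧ S ⊆ 𝒳}

/-- An extension-closed subcategory of `mod R`: closed under isomorphism,
direct summands and extensions. -/
def IsExtClosed (𝒳 : Set (ModuleCat.{u} R)) : Prop :=
  (∀ M N : ModuleCat.{u} R, Nonempty (M ≃ₗ[R] N) → M ∈ 𝒳 → N ∈ 𝒳) ∧
  (∀ M N : ModuleCat.{u} R, ModuleCat.of R (↥M × ↥N) ∈ 𝒳 → M ∈ 𝒳) ∧
  (∀ (A B C : ModuleCat.{u} R) (f : A →ₗ[R] B) (g : B →ₗ[R] C),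
    IsSES f g → A ∈ 𝒳 → C ∈ 𝒳 → B ∈ 𝒳)

/-- The extension closure of a set of modules. -/
def extClosure (S : Set (ModuleCat.{u} R)) : Set (ModuleCat.{u} R) :=
  ⋂₀ {𝒳 | IsExtClosed R 𝒳 ∧ S ⊆ 𝒳}

/-- `add R`: direct summands of finite free modules. -/
def addR : Set (ModuleCat.{u} R) :=
  {M | ∃ (n : ℕ) (N : ModuleCat.{u} R), Nonempty ((↥M × ↥N) ≃ₗ[R] (Fin n → R))}

/-- `pdLE n M` : the projective dimension of `M` is at most `n`. -/
def pdLE : ℕ → ModuleCat.{u} R → Prop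
  | 0, M => Module.Projective R M
  | n+1, M => ∃ (K P : ModuleCat.{u} R) (f : K →ₗ[R] P) (g : P →ₗ[R] M),
      Module.Finite R P ∧ Module.Projective R P ∧ IsSES f g ∧ pdLE n K

/-- The projective dimension, an element of `WithBot ℕ∞`; the zero module
has projective dimension `⊥ = -∞`. -/
noncomputable def pdim (M : ModuleCat.{u} R) : WithBot ℕ∞ :=
  sInf {x : WithBot ℕ∞ | (x = ⊥ ∧ Subsingleton M) ∨ ∃ n : ℕ, x = (n : ℕ∞) ∧ pdLE R n M}

/-- The depth of `M` with respect to the ideal `I`: the supremum of lengths of weakly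
`M`-regular sequences contained in `I`.  The zero module has depth `∞`. -/
noncomputable def depthE (I : Ideal R) (M : Type u) [AddCommGroup M] [Module R M] : ℕ∞ :=
  sSup {x : ℕ∞ | ∃ rs : List R, (∀ r ∈ rs, r ∈ I) ∧
    RingTheory.Sequence.IsWeaklyRegular M rs ∧ x = rs.length}

/-- The grade of an ideal: the length of a maximal `R`-regular sequence in `I`. -/
noncomputable def gradeE (I : Ideal R) : ℕ∞ := depthE R I R

/-- A grade consistent function on `Spec R`. -/
def GradeConsistent (f : PrimeSpectrum R → ℕ) : Prop :=
  (∀ p : PrimeSpectrum R, (f p : ℕ∞) ≤ gradeE R p.asIdeal) ∧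
  (∀ p q : PrimeSpectrum R, p.asIdeal ≤ q.asIdeal → f p ≤ f q)

/-- The localization of a module at a prime, as a module over the local ring `R_p`. -/
noncomputable abbrev localizeM (p : PrimeSpectrum R) (M : ModuleCat.{u} R) :
    ModuleCat.{u} (Localization.AtPrime p.asIdeal) :=
  ModuleCat.of (Localization.AtPrime p.asIdeal) (LocalizedModule p.asIdeal.primeCompl M)

/-- `pd_{R_p} M_p`. -/
noncomputable def localPdim (p : PrimeSpectrum R) (M : ModuleCat.{u} R) : WithBot ℕ∞ :=
  pdim (Localization.AtPrime p.asIdeal) (localizeM R p M)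

/-- `depth_{R_p} M_p`. -/
noncomputable def localDepth (p : PrimeSpectrum R) (M : ModuleCat.{u} R) : ℕ∞ :=
  depthE (Localization.AtPrime p.asIdeal)
    (IsLocalRing.maximalIdeal (Localization.AtPrime p.asIdeal))
    (LocalizedModule p.asIdeal.primeCompl M)

/-- The height of a prime ideal. -/
noncomputable def heightE (p : PrimeSpectrum R) : ℕ∞ := Order.height p

/-- `PD(R)` : finitely generated modules of finite projective dimension. -/
def PDcat : Set (ModuleCat.{u} R) :=
  {M | Module.Finite R M ∧ ∃ n : ℕ, pdLE R n M}

/-- `MCM(R)` : maximal Cohen-Macaulay modules. -/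
def MCMcat : Set (ModuleCat.{u} R) :=
  {M | Module.Finite R M ∧ ∀ p : PrimeSpectrum R, heightE R p ≤ localDepth R p M}

/-- The nonfree locus of a module. -/
def NF (M : ModuleCat.{u} R) : Set (PrimeSpectrum R) :=
  {p | ¬ Module.Free (Localization.AtPrime p.asIdeal) (LocalizedModule p.asIdeal.primeCompl M)}

/-- The infinite projective dimension locus of a module. -/
def IPD (M : ModuleCat.{u} R) : Set (PrimeSpectrum R) :=
  {p | localPdim R p M = (⊤ : WithBot ℕ∞)}

/-- The infinite projective dimension locus of a collection of modules. -/
def IPDcat (𝒳 : Set (ModuleCat.{u} R)) : Set (PrimeSpectrum R) :=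
  ⋃ M ∈ 𝒳, IPD R M

/-- The modules in `mod R` whose infinite projective dimension locus lies in `W`. -/
def IPDinv (W : Set (PrimeSpectrum R)) : Set (ModuleCat.{u} R) :=
  {M | Module.Finite R M ∧ IPD R M ⊆ W}

/-- A specialization closed subset of `Spec R`. -/
def SpecClosed (W : Set (PrimeSpectrum R)) : Prop :=
  ∀ p ∈ W, ∀ q : PrimeSpectrum R, p.asIdeal ≤ q.asIdeal → q ∈ W

/-- Membership in `add 𝒳_p`: direct summands of localizations of finite direct sums
of members of `𝒳`. -/
def memAddLocal (𝒳 : Set (ModuleCat.{u} R)) (p : PrimeSpectrum R)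
    (N : ModuleCat.{u} (Localization.AtPrime p.asIdeal)) : Prop :=
  ∃ (n : ℕ) (X : Fin n → ModuleCat.{u} R), (∀ i, X i ∈ 𝒳) ∧
    ∃ (N' : ModuleCat.{u} (Localization.AtPrime p.asIdeal)),
      Nonempty ((↥N × ↥N') ≃ₗ[Localization.AtPrime p.asIdeal]
        ((i : Fin n) → LocalizedModule p.asIdeal.primeCompl (X i)))

/-- `K` is an `n`-th syzygy of `M` computed from a minimal free resolution over the
local ring `S`. -/
def IsMinSyz (S : Type u) [CommRing S] [IsLocalRing S] :
    ℕ → ModuleCat.{u} S → ModuleCat.{u} S → Prop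
  | 0, M, K => Nonempty (K ≃ₗ[S] M)
  | n+1, M, K => ∃ (F : ModuleCat.{u} S) (g : F →ₗ[S] M) (K' : ModuleCat.{u} S)
      (i : K' →ₗ[S] F),
      Module.Finite S F ∧ Module.Free S F ∧ Function.Surjective g ∧
      (LinearMap.ker g ≤ (IsLocalRing.maximalIdeal S) • (⊤ : Submodule S F)) ∧
      Function.Injective i ∧ LinearMap.range i = LinearMap.ker g ∧
      IsMinSyz S n K' K

/-- `K` is an `n`-th syzygy of `M` in some projective resolution (over any ring). -/
def IsSyz : ℕ → ModuleCat.{u} R → ModuleCat.{u} R → Prop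
  | 0, M, K => Nonempty (K ≃ₗ[R] M)
  | n+1, M, K => ∃ (F : ModuleCat.{u} R) (g : F →ₗ[R] M) (K' : ModuleCat.{u} R)
      (i : K' →ₗ[R] F),
      Module.Finite R F ∧ Module.Projective R F ∧ Function.Surjective g ∧
      Function.Injective i ∧ LinearMap.range i = LinearMap.ker g ∧
      IsSyz n K' K

/-- `T` is (isomorphic to) the Auslander transpose of `M`, computed from a minimal
free presentation over the local ring `S`. -/
def IsTranspose (S : Type u) [CommRing S] [IsLocalRing S] (M T : ModuleCat.{u} S) : Prop :=
  ∃ (F1 F0 : ModuleCat.{u} S) (d : F1 →ₗ[S] F0) (e : F0 →ₗ[S] M),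
    Module.Finite S F0 ∧ Module.Free S F0 ∧ Module.Finite S F1 ∧ Module.Free S F1 ∧
    Function.Surjective e ∧ LinearMap.range d = LinearMap.ker e ∧
    LinearMap.ker e ≤ (IsLocalRing.maximalIdeal S) • (⊤ : Submodule S F0) ∧
    LinearMap.ker d ≤ (IsLocalRing.maximalIdeal S) • (⊤ : Submodule S F1) ∧
    Nonempty (T ≃ₗ[S] ((Module.Dual S F1) ⧸ LinearMap.range d.dualMap))

/-- `T` is (isomorphic to) `Tr Ω^n M` over the local ring `S`. -/
def IsTrOmega (S : Type u) [CommRing S] [IsLocalRing S] (n : ℕ) (M T : ModuleCat.{u} S) :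
    Prop :=
  ∃ K : ModuleCat.{u} S, IsMinSyz S n M K ∧ IsTranspose S K T

/-- Resolving subcategory `𝒳` is dominant on `W ⊆ Spec R`. -/
def DominantOn (𝒳 : Set (ModuleCat.{u} R)) (W : Set (PrimeSpectrum R)) : Prop :=
  ∀ p ∈ W, ∃ (n : ℕ) (K : ModuleCat.{u} (Localization.AtPrime p.asIdeal)),
    IsMinSyz (Localization.AtPrime p.asIdeal) n
      (ModuleCat.of (Localization.AtPrime p.asIdeal)
        (IsLocalRing.ResidueField (Localization.AtPrime p.asIdeal))) K ∧
    memAddLocal R 𝒳 p K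

/-- Dominant resolving subcategory. -/
def Dominant (𝒳 : Set (ModuleCat.{u} R)) : Prop := DominantOn R 𝒳 Set.univ

/-- A (noetherian) local ring is Cohen-Macaulay if its depth equals its Krull dimension. -/
def IsCMLocalRing (S : Type u) [CommRing S] [IsLocalRing S] : Prop :=
  IsNoetherianRing S ∧
    ((depthE S (IsLocalRing.maximalIdeal S) S : WithBot ℕ∞) = ringKrullDim S)

/-- A regular local ring: a noetherian local ring whose maximal ideal is generated by
`dim S` elements. -/
def IsRegLocalRing (S : Type u) [CommRing S] [IsLocalRing S] : Prop :=
  IsNoetherianRing S ∧ ∃ s : Finset S,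
    Ideal.span (s : Set S) = IsLocalRing.maximalIdeal S ∧
    ringKrullDim S = (s.card : WithBot ℕ∞)

/-- The singular locus of `R`. -/
def SingLocus : Set (PrimeSpectrum R) :=
  {p | ¬ IsRegLocalRing (Localization.AtPrime p.asIdeal)}

/-- A hypersurface local ring: the completion is a quotient of a regular local ring by
one element. -/
def IsHypersurfaceLocalRing (S : Type u) [CommRing S] [IsLocalRing S] : Prop :=
  ∃ (T : Type u) (_ : CommRing T) (_ : IsLocalRing T) (f : T),
    IsRegLocalRing T ∧
    Nonempty ((AdicCompletion (IsLocalRing.maximalIdeal S) S) ≃+* (T ⧸ Ideal.span {f}))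

/-- A complete intersection local ring: the completion is a quotient of a regular local
ring by a regular sequence. -/
def IsCompleteIntersectionLocalRing (S : Type u) [CommRing S] [IsLocalRing S] : Prop :=
  ∃ (T : Type u) (_ : CommRing T) (_ : IsLocalRing T) (rs : List T),
    IsRegLocalRing T ∧ RingTheory.Sequence.IsRegular T rs ∧
    Nonempty ((AdicCompletion (IsLocalRing.maximalIdeal S) S) ≃+*
      (T ⧸ Ideal.ofList rs))

/-- The subquotient `A / (A ⊓ B)` of two submodules, used for homology. -/
def subquot {S M : Type u} [CommRing S] [AddCommGroup M] [Module S M]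
    (A B : Submodule S M) : Type u :=
  A ⧸ (B.comap A.subtype)

noncomputable instance {S M : Type u} [CommRing S] [AddCommGroup M] [Module S M]
    (A B : Submodule S M) : AddCommGroup (subquot A B) :=
  inferInstanceAs (AddCommGroup (A ⧸ (B.comap A.subtype)))

noncomputable instance {S M : Type u} [CommRing S] [AddCommGroup M] [Module S M]
    (A B : Submodule S M) : Module S (subquot A B) :=
  inferInstanceAs (Module S (A ⧸ (B.comap A.subtype)))

/-- `E` is (isomorphic to) `Ext^{j+1}_S(M, S)`, computed from a finite free resolution. -/
def IsExtPos (S : Type u) [CommRing S] (j : ℕ) (M E : ModuleCat.{u} S) : Prop :=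
  ∃ (F : ℕ → ModuleCat.{u} S) (d : ∀ i : ℕ, (F (i+1) : Type u) →ₗ[S] F i)
    (e : (F 0 : Type u) →ₗ[S] M),
    (∀ i, Module.Finite S (F i)) ∧ (∀ i, Module.Free S (F i)) ∧
    Function.Surjective e ∧ LinearMap.range (d 0) = LinearMap.ker e ∧
    (∀ i, LinearMap.range (d (i+1)) = LinearMap.ker (d i)) ∧
    Nonempty (E ≃ₗ[S]
      subquot (LinearMap.ker ((d (j+1)).dualMap)) (LinearMap.range ((d j).dualMap)))

/-- `T` is (isomorphic to) `Tor_n^S(M, N)`, computed from a projective resolution of `M`. -/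
def IsTor (S : Type u) [CommRing S] (n : ℕ) (M N T : ModuleCat.{u} S) : Prop :=
  ∃ (F : ℕ → ModuleCat.{u} S) (d : ∀ i : ℕ, (F (i+1) : Type u) →ₗ[S] F i)
    (e : (F 0 : Type u) →ₗ[S] M),
    (∀ i, Module.Projective S (F i)) ∧
    Function.Surjective e ∧ LinearMap.range (d 0) = LinearMap.ker e ∧
    (∀ i, LinearMap.range (d (i+1)) = LinearMap.ker (d i)) ∧
    (match n with
      | 0 => Nonempty (T ≃ₗ[S] TensorProduct S M N)
      | (j+1) => Nonempty (T ≃ₗ[S]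
          subquot (LinearMap.ker (LinearMap.rTensor (↥N) (d j)))
            (LinearMap.range (LinearMap.rTensor (↥N) (d (j+1))))))

/-- `idLE n M` : the injective dimension of `M` is at most `n`. -/
def idLE (S : Type u) [CommRing S] : ℕ → ModuleCat.{u} S → Prop
  | 0, M => Module.Injective S M
  | n+1, M => ∃ (I C : ModuleCat.{u} S) (f : M →ₗ[S] I) (g : I →ₗ[S] C),
      IsSES f g ∧ Module.Injective S I ∧ idLE S n C

/-- `PD_0^n(R)` over a local ring: modules of projective dimension at most `n` that are
free on the punctured spectrum. -/
def PD0n [IsLocalRing R] (n : ℕ) : Set (ModuleCat.{u} R) :=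
  {M | Module.Finite R M ∧ pdLE R n M ∧
    ∀ p : PrimeSpectrum R, p.asIdeal ≠ IsLocalRing.maximalIdeal R →
      Module.Free (Localization.AtPrime p.asIdeal) (LocalizedModule p.asIdeal.primeCompl M)}

/-- `PD_0(R)` over a local ring: modules of finite projective dimension that are
free on the punctured spectrum. -/
def PD0 [IsLocalRing R] : Set (ModuleCat.{u} R) :=
  {M | Module.Finite R M ∧ (∃ n : ℕ, pdLE R n M) ∧
    ∀ p : PrimeSpectrum R, p.asIdeal ≠ IsLocalRing.maximalIdeal R →
      Module.Free (Localization.AtPrime p.asIdeal) (LocalizedModule p.asIdeal.primeCompl M)}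

/-- The residue field of a local ring, as a bundled module. -/
noncomputable abbrev residueMod (S : Type u) [CommRing S] [IsLocalRing S] : ModuleCat.{u} S :=
  ModuleCat.of S (IsLocalRing.ResidueField S)


section Helpers

variable {R}

/-- Modules having a first syzygy in `X`. -/
def sig (X : Set (ModuleCat.{u} R)) : Set (ModuleCat.{u} R) :=
  {A | ∃ (K P : ModuleCat.{u} R) (f : K →ₗ[R] P) (g : P →ₗ[R] A),
    IsSES f g ∧ Module.Finite R P ∧ Module.Projective R P ∧ K ∈ X}

theorem isSES_ker {A B : Type u} [AddCommGroup A] [Module R A] [AddCommGroup B] [Module R B]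
    (g : A →ₗ[R] B) (hg : Function.Surjective g) : IsSES (LinearMap.ker g).subtype g :=
  ⟨Subtype.val_injective, hg, by simp⟩

theorem isSES_mkQ {A : Type u} [AddCommGroup A] [Module R A] (S : Submodule R A) :
    IsSES S.subtype S.mkQ :=
  ⟨Subtype.val_injective, S.mkQ_surjective, by simp⟩

section Res

variable {X : Set (ModuleCat.{u} R)}

theorem res_iso (hX : IsResolving R X) {A B : Type u} [AddCommGroup A] [Module R A]
    [AddCommGroup B] [Module R B] (e : A ≃ₗ[R] B) (h : ModuleCat.of R A ∈ X) :
    ModuleCat.of R B ∈ X :=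
  hX.iso_closed (ModuleCat.of R A) (ModuleCat.of R B) ⟨e⟩ h

theorem res_ext (hX : IsResolving R X) {A B C : Type u} [AddCommGroup A] [Module R A]
    [AddCommGroup B] [Module R B] [AddCommGroup C] [Module R C]
    {f : A →ₗ[R] B} {g : B →ₗ[R] C} (h : IsSES f g)
    (hA : ModuleCat.of R A ∈ X) (hC : ModuleCat.of R C ∈ X) : ModuleCat.of R B ∈ X :=
  hX.ext_closed (ModuleCat.of R A) (ModuleCat.of R B) (ModuleCat.of R C) f g h hA hC

theorem res_proj (hX : IsResolving R X) (A : Type u) [AddCommGroup A] [Module R A]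
    [Module.Finite R A] [Module.Projective R A] : ModuleCat.of R A ∈ X :=
  hX.proj_mem (ModuleCat.of R A) ‹_› ‹_›

theorem res_subsingleton (hX : IsResolving R X) (A : Type u) [AddCommGroup A] [Module R A]
    [Subsingleton A] : ModuleCat.of R A ∈ X :=
  res_proj hX A

theorem res_fst (hX : IsResolving R X) {A B : Type u} [AddCommGroup A] [Module R A]
    [AddCommGroup B] [Module R B] (h : ModuleCat.of R (A × B) ∈ X) : ModuleCat.of R A ∈ X :=
  hX.summand_closed (ModuleCat.of R A) (ModuleCat.of R B) h

theorem res_snd (hX : IsResolving R X) {A B : Type u} [AddCommGroup A] [Module R A]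
    [AddCommGroup B] [Module R B] (h : ModuleCat.of R (A × B) ∈ X) : ModuleCat.of R B ∈ X :=
  res_fst hX (res_iso hX (LinearEquiv.prodComm R A B) h)

theorem isSES_prod (A B : Type u) [AddCommGroup A] [Module R A]
    [AddCommGroup B] [Module R B] : IsSES (LinearMap.inl R A B) (LinearMap.snd R A B) :=
  ⟨LinearMap.inl_injective, LinearMap.snd_surjective, by rw [LinearMap.range_inl]⟩

theorem res_prod (hX : IsResolving R X) {A B : Type u} [AddCommGroup A] [Module R A]
    [AddCommGroup B] [Module R B] (hA : ModuleCat.of R A ∈ X) (hB : ModuleCat.of R B ∈ X) :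
    ModuleCat.of R (A × B) ∈ X :=
  res_ext hX (isSES_prod A B) hA hB

theorem res_pi (hX : IsResolving R X) {A : Type u} [AddCommGroup A] [Module R A]
    (hA : ModuleCat.of R A ∈ X) (n : ℕ) : ModuleCat.of R (Fin n → A) ∈ X := by
  induction n with
  | zero => exact res_subsingleton hX _
  | succ n ih => exact res_iso hX (Fin.consLinearEquiv R (fun _ => A)) (res_prod hX hA ih)

/-- Pullback of `g : B → C` and `p : P → C`. -/
abbrev pb {B C P : Type u} [AddCommGroup B] [Module R B] [AddCommGroup C] [Module R C]
    [AddCommGroup P] [Module R P] (g : B →ₗ[R] C) (p : P →ₗ[R] C) : Submodule R (B × P) :=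
  LinearMap.ker (g.comp (LinearMap.fst R B P) - p.comp (LinearMap.snd R B P))

theorem mem_pb {B C P : Type u} [AddCommGroup B] [Module R B] [AddCommGroup C] [Module R C]
    [AddCommGroup P] [Module R P] (g : B →ₗ[R] C) (p : P →ₗ[R] C) (x : B × P) :
    x ∈ pb g p ↔ g x.1 = p x.2 := by
  simp [sub_eq_zero]

/-- The pullback is an extension of `B` by the kernel of `p`. -/
theorem pb_ses {B C P L : Type u} [AddCommGroup B] [Module R B] [AddCommGroup C] [Module R C]
    [AddCommGroup P] [Module R P] [AddCommGroup L] [Module R L]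
    (g : B →ₗ[R] C) {l : L →ₗ[R] P} {p : P →ₗ[R] C} (h : IsSES l p) :
    ∃ (f : L →ₗ[R] pb g p) (q : pb g p →ₗ[R] B), IsSES f q := by
  obtain ⟨h1, h2, h3⟩ := h
  have hlp : ∀ x, p (l x) = 0 := fun x => by
    have : l x ∈ LinearMap.ker p := h3 ▸ LinearMap.mem_range_self l x
    simpa using this
  refine ⟨LinearMap.codRestrict _ ((LinearMap.inr R B P).comp l)
    (fun x => by rw [mem_pb]; simp [hlp]), (LinearMap.fst R B P).comp (pb g p).subtype,
    ?_, ?_, ?_⟩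
  · intro x y hxy
    have := congrArg (fun z : pb g p => (z : B × P).2) hxy
    exact h1 (by simpa using this)
  · intro b
    obtain ⟨y, hy⟩ := h2 (g b)
    exact ⟨⟨(b, y), by rw [mem_pb]; exact hy.symm⟩, rfl⟩
  · ext ⟨⟨b, y⟩, hx⟩
    rw [mem_pb] at hx
    simp only [LinearMap.mem_range, LinearMap.mem_ker]
    constructor
    · rintro ⟨z, hz⟩
      have := congrArg (fun z : pb g p => (z : B × P).1) hz
      simpa using this.symm
    · intro hb
      have hb' : b = 0 := by simpa using hb
      subst hb'
      have : y ∈ LinearMap.range l := by rw [h3]; simpa using hx.symm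
      obtain ⟨z, hz⟩ := this
      exact ⟨z, Subtype.ext (by simp [hz])⟩

/-- The pullback along a map from a projective module splits. -/
theorem pb_split {A B C P : Type u} [AddCommGroup A] [Module R A] [AddCommGroup B] [Module R B]
    [AddCommGroup C] [Module R C] [AddCommGroup P] [Module R P] [Module.Projective R P]
    {f : A →ₗ[R] B} {g : B →ₗ[R] C} (h : IsSES f g) (p : P →ₗ[R] C) :
    Nonempty ((A × P) ≃ₗ[R] pb g p) := by
  obtain ⟨h1, h2, h3⟩ := h
  have hfg : ∀ x, g (f x) = 0 := fun x => by
    have : f x ∈ LinearMap.ker g := h3 ▸ LinearMap.mem_range_self f x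
    simpa using this
  obtain ⟨s, hs⟩ := Module.projective_lifting_property g p h2
  have hs' : ∀ y, g (s y) = p y := fun y => by rw [← hs]; rfl
  let φ : (A × P) →ₗ[R] pb g p := LinearMap.codRestrict _
    (((f.comp (LinearMap.fst R A P)) + (s.comp (LinearMap.snd R A P))).prod
      (LinearMap.snd R A P)) (fun x => by rw [mem_pb]; simp [hfg, hs'])
  refine ⟨LinearEquiv.ofBijective φ ⟨?_, ?_⟩⟩
  · rintro ⟨a, y⟩ ⟨a', y'⟩ hxy
    have e1 : f a + s y = f a' + s y' := congrArg (fun z : pb g p => (z : B × P).1) hxy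
    have e2 : y = y' := congrArg (fun z : pb g p => (z : B × P).2) hxy
    subst e2
    rw [h1 (add_right_cancel e1)]
  · rintro ⟨⟨b, y⟩, hx⟩
    rw [mem_pb] at hx
    have : b - s y ∈ LinearMap.range f := by
      rw [h3]; simp only [LinearMap.mem_ker, map_sub, hs', sub_eq_zero]; exact hx
    obtain ⟨a, ha⟩ := this
    refine ⟨(a, y), Subtype.ext (Prod.ext ?_ rfl)⟩
    change f a + s y = b
    rw [ha]; abel

theorem res_left (hX : IsResolving R X) {A B C : Type u} [AddCommGroup A] [Module R A]
    [AddCommGroup B] [Module R B] [AddCommGroup C] [Module R C]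
    {f : A →ₗ[R] B} {g : B →ₗ[R] C} (h : IsSES f g)
    (hB : ModuleCat.of R B ∈ X) (hC : ModuleCat.of R C ∈ sig X) : ModuleCat.of R A ∈ X := by
  obtain ⟨L, P, l, p, hlp, hPf, hPp, hL⟩ := hC
  obtain ⟨l', p', hlp'⟩ := pb_ses g hlp
  obtain ⟨e⟩ := pb_split h p
  exact res_fst hX (res_iso hX e.symm (res_ext hX hlp' hL hB))

theorem res_right (hX : IsResolving R X) {A B C : Type u} [AddCommGroup A] [Module R A]
    [AddCommGroup B] [Module R B] [AddCommGroup C] [Module R C]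
    {f : A →ₗ[R] B} {g : B →ₗ[R] C} (h : IsSES f g)
    (hA : ModuleCat.of R A ∈ X) (hB : ModuleCat.of R B ∈ sig X) :
    ModuleCat.of R C ∈ sig X := by
  obtain ⟨L, P, l, p, hlp, hPf, hPp, hL⟩ := hB
  obtain ⟨h1, h2, h3⟩ := h
  have hp : Function.Surjective p := hlp.2.1
  refine ⟨ModuleCat.of R (LinearMap.ker (g.comp (p : P →ₗ[R] B))), P, Submodule.subtype _,
    g.comp (p : P →ₗ[R] B), isSES_ker _ (h2.comp hp), hPf, hPp, ?_⟩
  obtain ⟨l', p', hlp'⟩ := pb_ses f hlp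
  refine res_iso hX ?_ (res_ext hX hlp' hL hA)
  have hfg : ∀ x, g (f x) = 0 := fun x => by
    have : f x ∈ LinearMap.ker g := h3 ▸ LinearMap.mem_range_self f x
    simpa using this
  let φ : pb f (p : P →ₗ[R] B) →ₗ[R] LinearMap.ker (g.comp (p : P →ₗ[R] B)) :=
    LinearMap.codRestrict _ ((LinearMap.snd R A P).comp (Submodule.subtype _)) (by
      rintro ⟨⟨a, y⟩, hx⟩
      rw [mem_pb] at hx
      change g (p y) = 0
      rw [← hx]
      exact hfg a)
  refine LinearEquiv.ofBijective φ ⟨?_, ?_⟩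
  · rintro ⟨⟨a, y⟩, hx⟩ ⟨⟨a', y'⟩, hx'⟩ hxy
    rw [mem_pb] at hx hx'
    have e2 : y = y' := congrArg Subtype.val hxy
    subst e2
    have : a = a' := h1 (hx.trans hx'.symm)
    subst this
    rfl
  · rintro ⟨y, hy⟩
    have : p y ∈ LinearMap.range f := by rw [h3]; exact hy
    obtain ⟨a, ha⟩ := this
    exact ⟨⟨(a, y), by rw [mem_pb]; exact ha⟩, rfl⟩

theorem prod_equiv {A B : Type u} [AddCommGroup A] [Module R A] [AddCommGroup B] [Module R B]
    (S : Submodule R A) (T : Submodule R B) : Nonempty (S.prod T ≃ₗ[R] (S × T)) :=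
  ⟨{ toFun := fun x => (⟨x.1.1, x.2.1⟩, ⟨x.1.2, x.2.2⟩)
     invFun := fun x => ⟨(x.1, x.2), x.1.2, x.2.2⟩
     map_add' := fun _ _ => rfl
     map_smul' := fun _ _ => rfl
     left_inv := fun _ => rfl
     right_inv := fun _ => rfl }⟩

theorem res_syz (hX : IsResolving R X) {K P A : Type u} [AddCommGroup K] [Module R K]
    [AddCommGroup P] [Module R P] [AddCommGroup A] [Module R A] [Module.Finite R P]
    [Module.Projective R P]
    {f : K →ₗ[R] P} {g : P →ₗ[R] A} (h : IsSES f g) (hA : ModuleCat.of R A ∈ sig X) :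
    ModuleCat.of R K ∈ X :=
  res_left hX h (res_proj hX P) hA

theorem exists_pres [IsNoetherianRing R] (A : Type u) [AddCommGroup A] [Module R A]
    [Module.Finite R A] : ∃ (n : ℕ) (g : (Fin n → R) →ₗ[R] A), Function.Surjective g :=
  Module.Finite.exists_fin' R A

theorem res_le_sig [IsNoetherianRing R] (hX : IsResolving R X) : X ⊆ sig X := by
  intro A hA
  have := hX.fg A hA
  obtain ⟨n, g, hg⟩ := exists_pres (R := R) A
  refine ⟨ModuleCat.of R (LinearMap.ker g), ModuleCat.of R (Fin n → R), Submodule.subtype _, g,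
    isSES_ker g hg, inferInstance, inferInstance, ?_⟩
  exact hX.syzygy_closed (ModuleCat.of R (LinearMap.ker g)) (ModuleCat.of R (Fin n → R)) A
    (Submodule.subtype _) g (isSES_ker g hg) inferInstance inferInstance inferInstance hA

theorem sig_fg (A : ModuleCat.{u} R) (h : A ∈ sig X) : Module.Finite R A := by
  obtain ⟨L, P, l, p, hlp, hPf, hPp, hL⟩ := h
  exact Module.Finite.of_surjective p hlp.2.1

theorem sig_resolving [IsNoetherianRing R] (hX : IsResolving R X) : IsResolving R (sig X) where
  fg := sig_fg
  iso_closed := by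
    rintro M N ⟨e⟩ ⟨L, P, l, p, hlp, hPf, hPp, hL⟩
    refine ⟨L, P, l, (e : M →ₗ[R] N).comp p, ⟨hlp.1, e.surjective.comp hlp.2.1, ?_⟩,
      hPf, hPp, hL⟩
    rw [hlp.2.2, LinearEquiv.ker_comp]
  proj_mem := fun M h1 h2 => res_le_sig hX (hX.proj_mem M h1 h2)
  summand_closed := by
    intro A B h
    have hfin : Module.Finite R (A × B) := sig_fg _ h
    have : Module.Finite R A := Module.Finite.of_surjective _ (LinearMap.fst_surjective (R := R) (M := A) (M₂ := B))
    have : Module.Finite R B := Module.Finite.of_surjective _ (LinearMap.snd_surjective (R := R) (M := A) (M₂ := B))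
    obtain ⟨n, g, hg⟩ := exists_pres (R := R) A
    obtain ⟨m, k, hk⟩ := exists_pres (R := R) B
    refine ⟨ModuleCat.of R (LinearMap.ker g), ModuleCat.of R (Fin n → R), Submodule.subtype _, g,
      isSES_ker g hg, inferInstance, inferInstance, ?_⟩
    have hs : Function.Surjective (g.prodMap k) := Function.Surjective.prodMap hg hk
    have := res_syz hX (isSES_ker (g.prodMap k) hs) h
    rw [LinearMap.ker_prodMap] at this
    exact res_fst hX (res_iso hX (prod_equiv _ _).some this)
  ext_closed := by
    intro A B C f g h hA hC
    obtain ⟨L, P, l, p, hlp, hPf, hPp, hL⟩ := hC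
    obtain ⟨l', p', hlp'⟩ := pb_ses g hlp
    obtain ⟨e⟩ := pb_split h p
    refine res_right hX hlp' hL ?_
    obtain ⟨L2, P2, l2, p2, hlp2, hPf2, hPp2, hL2⟩ := hA
    refine ⟨L2, ModuleCat.of R (P2 × P), (LinearMap.inl R P2 P).comp l2,
      (e : (A × P) →ₗ[R] _).comp (p2.prodMap LinearMap.id), ⟨?_, ?_, ?_⟩, inferInstance,
      inferInstance, hL2⟩
    · exact LinearMap.inl_injective.comp hlp2.1
    · exact e.surjective.comp (Function.Surjective.prodMap hlp2.2.1 Function.surjective_id)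
    · rw [LinearEquiv.ker_comp, LinearMap.ker_prodMap, LinearMap.range_comp, hlp2.2.2,
        LinearMap.ker_id]
      ext ⟨a, b⟩
      simp [Submodule.mem_prod, eq_comm]
  syzygy_closed := by
    intro K P M f g h h1 h2 h3 hM
    exact res_le_sig hX (res_syz hX h hM)

theorem sig_iter_resolving [IsNoetherianRing R] (hX : IsResolving R X) (n : ℕ) :
    IsResolving R (sig^[n] X) := by
  induction n with
  | zero => exact hX
  | succ n ih => rw [Function.iterate_succ_apply']; exact sig_resolving ih

theorem sig_iter_mono [IsNoetherianRing R] (hX : IsResolving R X) {a b : ℕ} (h : a ≤ b) :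
    sig^[a] X ⊆ sig^[b] X := by
  induction b, h using Nat.le_induction with
  | base => exact subset_rfl
  | succ b _ ih =>
    rw [Function.iterate_succ_apply']; exact ih.trans (res_le_sig (sig_iter_resolving hX b))

end Res

section Local

variable [IsNoetherianRing R] [IsLocalRing R]

theorem minSyz_up {X : Set (ModuleCat.{u} R)} (hX : IsResolving R X) (n : ℕ) (M K : ModuleCat.{u} R)
    (h : IsMinSyz R n M K) (hK : K ∈ X) : M ∈ sig^[n] X := by
  induction n generalizing M with
  | zero => exact hX.iso_closed _ _ h hK
  | succ n ih =>
    obtain ⟨F, g, K', i, h1, h2, h3, h4, h5, h6, h7⟩ := h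
    rw [Function.iterate_succ_apply']
    exact ⟨K', F, i, g, ⟨h5, h3, h6⟩, h1, inferInstance, ih K' h7⟩

theorem minSyz_down {X : Set (ModuleCat.{u} R)} (hX : IsResolving R X) (n : ℕ) (M K : ModuleCat.{u} R)
    (h : IsMinSyz R n M K) (hM : M ∈ sig^[n] X) : K ∈ X := by
  induction n generalizing M with
  | zero => exact hX.iso_closed M K ⟨h.some.symm⟩ hM
  | succ n ih =>
    obtain ⟨F, g, K', i, h1, h2, h3, h4, h5, h6, h7⟩ := h
    rw [Function.iterate_succ_apply'] at hM
    exact ih K' h7 (res_syz (sig_iter_resolving hX n) (f := i) (g := g) ⟨h5, h3, h6⟩ hM)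

theorem torsion_equiv (A : Type u) [AddCommGroup A] [Module R A] [Module.Finite R A]
    (h : ∀ y ∈ IsLocalRing.maximalIdeal R, ∀ a : A, y • a = 0) :
    ∃ n : ℕ, Nonempty (A ≃ₗ[R] (Fin n → IsLocalRing.ResidueField R)) := by
  have ht : Module.IsTorsionBySet R A (IsLocalRing.maximalIdeal R : Set R) :=
    fun a y => h y y.2 a
  letI : Module (IsLocalRing.ResidueField R) A := ht.module
  have : IsScalarTower R (IsLocalRing.ResidueField R) A := ht.isScalarTower
  have : Module.Finite (IsLocalRing.ResidueField R) A :=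
    Module.Finite.of_restrictScalars_finite R _ A
  exact ⟨_, ⟨((Module.finBasis (IsLocalRing.ResidueField R) A).equivFun).restrictScalars R⟩⟩

theorem torsion_mem {X : Set (ModuleCat.{u} R)} (hX : IsResolving R X)
    (hk : residueMod R ∈ X) (A : Type u) [AddCommGroup A] [Module R A] [Module.Finite R A]
    (h : ∀ y ∈ IsLocalRing.maximalIdeal R, ∀ a : A, y • a = 0) : ModuleCat.of R A ∈ X := by
  obtain ⟨n, ⟨e⟩⟩ := torsion_equiv A h
  exact res_iso hX e.symm (res_pi hX hk n)

theorem residue_mem {X : Set (ModuleCat.{u} R)} (hX : IsResolving R X)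
    (A : Type u) [AddCommGroup A] [Module R A] [Nontrivial A]
    (h : ∀ y ∈ IsLocalRing.maximalIdeal R, ∀ a : A, y • a = 0) (hA : ModuleCat.of R A ∈ X) :
    residueMod R ∈ X := by
  have : Module.Finite R A := hX.fg _ hA
  obtain ⟨n, ⟨e⟩⟩ := torsion_equiv A h
  cases n with
  | zero => exact absurd e.injective.subsingleton (not_subsingleton A)
  | succ n =>
    exact res_fst hX (res_iso hX (e.trans (Fin.consLinearEquiv R (fun _ => _)).symm) hA)

end Local

section Koszul

/-- Shift of a sequence of modules. -/
def prevK (C : ℕ → ModuleCat.{u} R) : ℕ → ModuleCat.{u} R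
  | 0 => ModuleCat.of R PUnit
  | n + 1 => C n

/-- Shifted differential. -/
def prevD (C : ℕ → ModuleCat.{u} R) (d : ∀ i, C i →ₗ[R] C (i + 1)) :
    ∀ i, prevK C i →ₗ[R] C i
  | 0 => 0
  | n + 1 => d n

/-- Shifted homotopy. -/
def prevH (C : ℕ → ModuleCat.{u} R) (h : ∀ i, C (i + 1) →ₗ[R] C i) :
    ∀ i, C i →ₗ[R] prevK C i
  | 0 => 0
  | n + 1 => h n

theorem koszul (X : Set (ModuleCat.{u} R)) (hX : IsResolving R X) (M : Type u) [AddCommGroup M]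
    [Module R M] (hM : ModuleCat.of R M ∈ X) (ys : List R) :
    ∃ (C : ℕ → ModuleCat.{u} R) (d : ∀ i, C i →ₗ[R] C (i + 1)),
      (∀ i x, d (i + 1) (d i x) = 0) ∧ (∀ i, C i ∈ X) ∧
      (∃ N, ∀ i, N ≤ i → Subsingleton (C i)) ∧
      (∀ y ∈ ys, ∃ h : ∀ i, C (i + 1) →ₗ[R] C i,
        ∀ i x, prevD C d i (prevH C h i x) + h i (d i x) = y • x) ∧
      ∃ e : M →ₗ[R] C 0, Function.Injective e ∧
        ∀ m, (∀ y ∈ ys, y • m = 0) → d 0 (e m) = 0 := by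
  induction ys with
  | nil =>
    refine ⟨fun i => match i with
      | 0 => ModuleCat.of R M
      | _ + 1 => ModuleCat.of R PUnit, fun i => 0, fun i x => rfl, ?_, ⟨1, ?_⟩, by simp,
      LinearMap.id, Function.injective_id, fun m _ => rfl⟩
    · rintro (_ | i)
      · exact hM
      · exact res_subsingleton hX PUnit
    · rintro (_ | i) hi
      · omega
      · exact inferInstanceAs (Subsingleton PUnit)
  | cons y ys ih =>
    obtain ⟨C, d, hd, hC, ⟨N, hN⟩, hh, e, he, hed⟩ := ih
    have hpd : ∀ i x, d i (prevD C d i x) = 0 := by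
      rintro (_ | i) x
      · simp [prevD]
      · exact hd i x
    refine ⟨fun i => ModuleCat.of R (C i × prevK C i),
      fun i => ((d i).comp (LinearMap.fst R _ _)).prod
        (y • (LinearMap.fst R _ _) - (prevD C d i).comp (LinearMap.snd R _ _)),
      ?_, ?_, ⟨N + 1, ?_⟩, ?_, ?_⟩
    · rintro i ⟨a, b⟩
      refine Prod.ext (hd i a) ?_
      change y • d i a - d i (y • a - prevD C d i b) = 0
      rw [map_sub, hpd, map_smul]; simp
    · rintro (_ | i)
      · exact res_prod hX (hC 0) (res_subsingleton hX PUnit)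
      · exact res_prod hX (hC (i+1)) (hC i)
    · rintro (_ | i) hi
      · omega
      · have := hN (i+1) (by omega)
        have := hN i (by omega)
        exact inferInstanceAs (Subsingleton (C (i+1) × C i))
    · intro z hz
      rcases List.mem_cons.1 hz with rfl | hz
      · refine ⟨fun i => (LinearMap.inl R _ _).comp (LinearMap.snd R (C (i+1)) (C i)), ?_⟩
        rintro (_ | i) ⟨a, b⟩
        · refine Prod.ext ?_ ?_
          · change 0 + (z • a - 0) = z • a
            simp
          · exact Subsingleton.elim (α := PUnit) _ _
        · refine Prod.ext ?_ ?_
          · change d i b + (z • a - d i b) = z • a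
            abel
          · change C i at b
            change (z • b - prevD C d i 0) + (0 : C i) = z • b
            simp
      · obtain ⟨h, hh'⟩ := hh z hz
        refine ⟨fun i => ((h i).comp (LinearMap.fst R _ _)).prod
          (-((prevH C h i).comp (LinearMap.snd R (C (i+1)) (C i)))), ?_⟩
        rintro (_ | i) ⟨a, b⟩
        · refine Prod.ext ?_ ?_
          · exact hh' 0 a
          · exact Subsingleton.elim (α := PUnit) _ _
        · refine Prod.ext ?_ ?_
          · exact hh' (i+1) a
          · change C i at b
            change (y • h i a - prevD C d i (-(prevH C h i b))) +
              -(h i (y • a - d i b)) = z • b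
            rw [← hh' i b, map_neg, map_sub, map_smul]
            abel
    · refine ⟨(LinearMap.inl R _ _).comp e, LinearMap.inl_injective.comp he, ?_⟩
      intro m hm
      refine Prod.ext (hed m (fun z hz => hm z (List.mem_cons_of_mem _ hz))) ?_
      change y • e m - prevD C d 0 0 = 0
      rw [← map_smul, hm y List.mem_cons_self]
      simp

end Koszul

section Main

variable [IsNoetherianRing R] [IsLocalRing R]

theorem cycles_mem (C : ℕ → ModuleCat.{u} R) (d : ∀ i, C i →ₗ[R] C (i + 1))
    (hd : ∀ i x, d (i + 1) (d i x) = 0) (N : ℕ) (hN : ∀ i, N ≤ i → Subsingleton (C i))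
    (hH : ∀ i, ∀ y ∈ IsLocalRing.maximalIdeal R, ∀ x ∈ LinearMap.ker (d (i + 1)),
      y • x ∈ LinearMap.range (d i)) (j i : ℕ) (hij : N ≤ i + j)
    (X : Set (ModuleCat.{u} R)) (hX : IsResolving R X) (hC : ∀ i, C i ∈ X)
    (hk : residueMod R ∈ sig X) : ModuleCat.of R (LinearMap.ker (d i)) ∈ X := by
  induction j generalizing i X with
  | zero =>
    have := hN i hij
    exact res_subsingleton hX _
  | succ j ih =>
    have hS := sig_resolving hX
    have hZ := ih (i + 1) (by omega) (sig X) hS (fun i => res_le_sig hX (hC i))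
      (res_le_sig hS hk)
    have : ∀ i, Module.Finite R (C i) := fun i => hX.fg _ (hC i)
    let f : C i →ₗ[R] LinearMap.ker (d (i + 1)) :=
      LinearMap.codRestrict _ (d i) (fun x => hd i x)
    have hB : ModuleCat.of R (LinearMap.range f) ∈ sig X := by
      refine res_left hS (isSES_mkQ (LinearMap.range f)) hZ ?_
      refine torsion_mem (sig_resolving hS) (res_le_sig hS hk) _ ?_
      intro y hy a
      obtain ⟨x, rfl⟩ := Submodule.mkQ_surjective _ a
      rw [← map_smul, Submodule.mkQ_apply, Submodule.Quotient.mk_eq_zero]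
      obtain ⟨c, hc⟩ := hH i y hy x x.2
      exact ⟨c, Subtype.ext hc⟩
    have hker : LinearMap.ker f.rangeRestrict = LinearMap.ker (d i) := by
      rw [LinearMap.ker_rangeRestrict]; exact LinearMap.ker_codRestrict _ _ _
    have := res_left hX (isSES_ker f.rangeRestrict f.surjective_rangeRestrict) (hC i) hB
    rwa [hker] at this

theorem descend (X : Set (ModuleCat.{u} R)) (hX : IsResolving R X) (M : Type u) [AddCommGroup M]
    [Module R M] (hM : ModuleCat.of R M ∈ X) (m : M) (hm : m ≠ 0)
    (hsoc : ∀ y ∈ IsLocalRing.maximalIdeal R, y • m = 0)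
    (hk : residueMod R ∈ sig X) : residueMod R ∈ X := by
  obtain ⟨s, hs⟩ := (IsNoetherian.noetherian (IsLocalRing.maximalIdeal R))
  obtain ⟨C, d, hd, hC, ⟨N, hN⟩, hh, e, he, hed⟩ := koszul X hX M hM s.toList
  have hmem : ∀ y ∈ s, y ∈ IsLocalRing.maximalIdeal R := fun y hy => by
    rw [← hs]; exact Submodule.subset_span hy
  have hH : ∀ i, ∀ y ∈ IsLocalRing.maximalIdeal R, ∀ x ∈ LinearMap.ker (d (i + 1)),
      y • x ∈ LinearMap.range (d i) := by
    intro i y hy x hx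
    rw [← hs] at hy
    induction hy using Submodule.span_induction with
    | mem y hy =>
      obtain ⟨h, hh'⟩ := hh y (by simpa using hy)
      have := hh' (i + 1) x
      rw [LinearMap.mem_ker.1 hx, map_zero, add_zero] at this
      exact ⟨h i x, this⟩
    | zero => simp
    | add a b _ _ ha hb => rw [add_smul]; exact Submodule.add_mem _ ha hb
    | smul a b _ hb => rw [smul_assoc]; exact Submodule.smul_mem _ _ hb
  have h0 : ∀ y ∈ IsLocalRing.maximalIdeal R, ∀ x : LinearMap.ker (d 0), y • x = 0 := by
    intro y hy x
    rw [← hs] at hy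
    induction hy using Submodule.span_induction with
    | mem y hy =>
      obtain ⟨h, hh'⟩ := hh y (by simpa using hy)
      have := hh' 0 x
      rw [LinearMap.mem_ker.1 x.2, map_zero, add_zero] at this
      refine Subtype.ext (this.symm.trans ?_)
      simp [prevD]
    | zero => simp
    | add a b _ _ ha hb => rw [add_smul, ha, hb, add_zero]
    | smul a b _ hb => rw [smul_assoc, hb, smul_zero]
  have hZ := cycles_mem C d hd N hN hH N 0 (by omega) X hX hC hk
  have : Nontrivial (LinearMap.ker (d 0)) := by
    refine ⟨⟨⟨e m, hed m (fun y hy => hsoc y (hmem y (by simpa using hy)))⟩, 0, ?_⟩⟩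
    intro h
    have : e m = 0 := congrArg Subtype.val h
    exact hm (he (this.trans (map_zero e).symm))
  exact residue_mem hX _ h0 hZ

theorem exists_soc (M : Type u) [AddCommGroup M] [Module R M] [Module.Finite R M] [Nontrivial M]
    (h : ∀ y ∈ IsLocalRing.maximalIdeal R, ¬ IsSMulRegular M y) :
    ∃ m : M, m ≠ 0 ∧ ∀ y ∈ IsLocalRing.maximalIdeal R, y • m = 0 := by
  have hsub : (IsLocalRing.maximalIdeal R : Set R) ⊆ ⋃ p ∈ associatedPrimes R M, (p : Set R) := by
    rw [biUnion_associatedPrimes_eq_compl_regular R M]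
    exact fun y hy => h y hy
  obtain ⟨P, hP, hle⟩ := (Ideal.subset_union_prime_finite (associatedPrimes.finite R M)
    (f := id) 0 0 (fun p hp _ _ => IsAssociatedPrime.isPrime hp)).1 hsub
  obtain ⟨hPp, x, hx⟩ := (isAssociatedPrime_iff).1 hP
  simp only [id] at hle
  refine ⟨x, ?_, ?_⟩
  · rintro rfl
    apply hPp.ne_top
    rw [hx]; ext; simp
  · intro y hy
    have := hle hy
    rw [hx] at this
    simpa using this

open scoped Pointwise in
theorem reduce (rs : List R) (M : Type u) [AddCommGroup M] [Module R M] [Nontrivial M]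
    (X : Set (ModuleCat.{u} R)) (hX : IsResolving R X) (hM : ModuleCat.of R M ∈ X)
    (hrs : ∀ r ∈ rs, r ∈ IsLocalRing.maximalIdeal R)
    (hreg : RingTheory.Sequence.IsWeaklyRegular M rs) :
    ∃ N : ModuleCat.{u} R, N ∈ sig^[rs.length] X ∧ Nontrivial N ∧
      ∀ y, IsSMulRegular N y → RingTheory.Sequence.IsWeaklyRegular M (rs ++ [y]) := by
  induction rs generalizing M X with
  | nil =>
    refine ⟨ModuleCat.of R M, hM, ‹_›, fun y hy => ?_⟩
    exact (RingTheory.Sequence.isWeaklyRegular_singleton_iff M y).2 hy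
  | cons r rs ih =>
    rw [RingTheory.Sequence.isWeaklyRegular_cons_iff] at hreg
    obtain ⟨h1, h2⟩ := hreg
    have : Module.Finite R M := hX.fg _ hM
    have hr := hrs r List.mem_cons_self
    have : Nontrivial (QuotSMulTop r M) :=
      nontrivial_quotSMulTop_of_mem_maximalIdeal M hr
    have hQ : ModuleCat.of R (QuotSMulTop r M) ∈ sig X := by
      refine res_right hX (A := M) (B := M) (f := LinearMap.lsmul R M r)
        (g := Submodule.mkQ (r • (⊤ : Submodule R M))) ⟨h1, Submodule.mkQ_surjective _, ?_⟩ hM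
        (res_le_sig hX hM)
      rw [Submodule.ker_mkQ]
      ext x
      simp [Submodule.mem_smul_pointwise_iff_exists]
    obtain ⟨N, hN, hN1, hN2⟩ := ih (QuotSMulTop r M) (sig X) (sig_resolving hX) hQ
      (fun z hz => hrs z (List.mem_cons_of_mem _ hz)) h2
    refine ⟨N, hN, hN1, fun y hy => ?_⟩
    rw [List.cons_append, RingTheory.Sequence.isWeaklyRegular_cons_iff]
    exact ⟨h1, hN2 y hy⟩

end Main

end Helpers

/-- Proposition: over a `d`-dimensional Cohen-Macaulay local ring, if `M` is a nonzero
module of depth `t`, then `Ω^t k ∈ res (M ⊕ Ω^n k)` for every `n ≥ 0`. -/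
theorem syzygy_mem_resClosure [IsNoetherianRing R] [IsLocalRing R]
    (hCM : IsCMLocalRing R) (d : ℕ) (hd : ringKrullDim R = (d : WithBot ℕ∞))
    (M : ModuleCat.{u} R) (hfg : Module.Finite R M) (hM : Nontrivial M)
    (t : ℕ) (ht : depthE R (IsLocalRing.maximalIdeal R) M = (t : ℕ∞))
    (n : ℕ) (K Kt : ModuleCat.{u} R)
    (hK : IsMinSyz R n (residueMod R) K) (hKt : IsMinSyz R t (residueMod R) Kt) :
    Kt ∈ resClosure R {ModuleCat.of R (↥M × ↥K)} := by
  have := hfg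
  rw [resClosure, Set.mem_sInter]
  rintro X ⟨hX, hsub⟩
  have hMK : ModuleCat.of R (↥M × ↥K) ∈ X := hsub rfl
  have hMX : ModuleCat.of R M ∈ X := res_fst hX hMK
  have hKX : ModuleCat.of R K ∈ X := res_snd hX hMK
  have hkn : residueMod R ∈ sig^[n] X := minSyz_up hX n _ K hK hKX
  refine minSyz_down hX t (residueMod R) Kt hKt ?_
  have hne : Nonempty {x : ℕ∞ | ∃ rs : List R, (∀ r ∈ rs, r ∈ IsLocalRing.maximalIdeal R) ∧
      RingTheory.Sequence.IsWeaklyRegular M rs ∧ x = rs.length} :=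
    ⟨0, [], by simp, RingTheory.Sequence.IsWeaklyRegular.nil R M, by simp⟩
  have hmem := ENat.sSup_mem_of_nonempty_of_lt_top
    (s := {x : ℕ∞ | ∃ rs : List R, (∀ r ∈ rs, r ∈ IsLocalRing.maximalIdeal R) ∧
      RingTheory.Sequence.IsWeaklyRegular M rs ∧ x = rs.length})
    (by rw [depthE] at ht; rw [ht]; exact ENat.natCast_lt_top t)
  obtain ⟨rs, hrs, hreg, hlen⟩ := hmem
  have hlen' : rs.length = t := by
    have h2 : (t : ℕ∞) = rs.length := ht.symm.trans hlen
    exact_mod_cast h2.symm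
  obtain ⟨N, hN, hN1, hN2⟩ := reduce rs M X hX hMX hrs hreg
  rw [hlen'] at hN
  have : Module.Finite R N := (sig_iter_resolving hX t).fg N hN
  obtain ⟨m, hm, hsoc⟩ := exists_soc (R := R) N (by
    intro y hy hyreg
    have hle : ((rs ++ [y]).length : ℕ∞) ≤ depthE R (IsLocalRing.maximalIdeal R) M := by
      refine le_sSup ⟨rs ++ [y], ?_, hN2 y hyreg, rfl⟩
      intro r hr
      rcases List.mem_append.1 hr with hr | hr
      · exact hrs r hr
      · rw [List.mem_singleton.1 hr]; exact hy
    rw [ht, List.length_append, hlen'] at hle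
    have : t + [y].length ≤ t := by exact_mod_cast hle
    simp at this)
  have key : ∀ j, residueMod R ∈ sig^[t + j] X → residueMod R ∈ sig^[t] X := by
    intro j
    induction j with
    | zero => exact id
    | succ j ih =>
      intro h
      rw [← add_assoc, Function.iterate_succ_apply'] at h
      exact ih (descend _ (sig_iter_resolving hX (t + j)) N
        (sig_iter_mono hX (Nat.le_add_right t j) hN) m hm hsoc h)
  exact key n (sig_iter_mono hX (Nat.le_add_left n t) hkn)

end ResolvPaper
end

section
/- Let R be a commutative noetherian local ring with depth R = t > 0, and let M be a finitely generated R-module that is free when localized at every nonmaximal prime. Then for each integer 0 ≤ i < t there exist an integer n_i ≥ 0 and an exact sequence 0 → Tr Ω^{i+1} Tr Ω^{i+1} M → (Tr Ω^i Tr Ω^i M) ⊕ R^{n_i} → Tr Ω^i Ext^{i+1}_R(M, R) → 0 of finitely generated R-modules. -/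
universe u

open CategoryTheory

namespace ResolvPaper

variable (R : Type u) [CommRing R]

section Helpers

variable {S : Type u} [CommRing S]

/-- Stable isomorphism: isomorphism up to finite projective summands. -/
def Stab (S : Type u) [CommRing S] (X Y : Type u) [AddCommGroup X] [Module S X]
    [AddCommGroup Y] [Module S Y] : Prop :=
  ∃ P Q : ModuleCat.{u} S, (Module.Finite S P ∧ Module.Projective S P) ∧
    (Module.Finite S Q ∧ Module.Projective S Q) ∧ Nonempty ((X × P) ≃ₗ[S] (Y × Q))

/-- The (possibly nonminimal) transpose of a map. -/
abbrev TrMap {F1 F0 : Type u} [AddCommGroup F1] [Module S F1] [AddCommGroup F0] [Module S F0]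
    (d : F1 →ₗ[S] F0) : Type u := Module.Dual S F1 ⧸ LinearMap.range d.dualMap

section

variable {X Y Z A B C P Q F F0 F1 F0' F1' G K K' M M' N : Type u}
  [AddCommGroup X] [Module S X] [AddCommGroup Y] [Module S Y] [AddCommGroup Z] [Module S Z]
  [AddCommGroup A] [Module S A] [AddCommGroup B] [Module S B] [AddCommGroup C] [Module S C]
  [AddCommGroup P] [Module S P] [AddCommGroup Q] [Module S Q] [AddCommGroup F] [Module S F]
  [AddCommGroup F0] [Module S F0] [AddCommGroup F1] [Module S F1]
  [AddCommGroup F0'] [Module S F0'] [AddCommGroup F1'] [Module S F1']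
  [AddCommGroup G] [Module S G] [AddCommGroup K] [Module S K] [AddCommGroup K'] [Module S K']
  [AddCommGroup M] [Module S M] [AddCommGroup M'] [Module S M'] [AddCommGroup N] [Module S N]

theorem Stab.mk' (P Q : Type u) [AddCommGroup P] [Module S P] [AddCommGroup Q] [Module S Q]
    [Module.Finite S P] [Module.Projective S P] [Module.Finite S Q] [Module.Projective S Q]
    (h : Nonempty ((X × P) ≃ₗ[S] (Y × Q))) : Stab S X Y :=
  ⟨ModuleCat.of S P, ModuleCat.of S Q, ⟨‹_›, ‹_›⟩, ⟨‹_›, ‹_›⟩, h⟩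

theorem Stab.of_equiv (e : X ≃ₗ[S] Y) : Stab S X Y :=
  Stab.mk' PUnit PUnit ⟨e.prodCongr (LinearEquiv.refl S _)⟩

theorem Stab.symm (h : Stab S X Y) : Stab S Y X := by
  obtain ⟨P, Q, hP, hQ, ⟨e⟩⟩ := h
  exact ⟨Q, P, hQ, hP, ⟨e.symm⟩⟩

/-- swapping the last two factors -/
def swapR (X P Q : Type u) [AddCommGroup X] [Module S X] [AddCommGroup P] [Module S P]
    [AddCommGroup Q] [Module S Q] : ((X × P) × Q) ≃ₗ[S] ((X × Q) × P) :=
  (LinearEquiv.prodAssoc S X P Q).trans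
    (((LinearEquiv.refl S X).prodCongr (LinearEquiv.prodComm S P Q)).trans
      (LinearEquiv.prodAssoc S X Q P).symm)

theorem Stab.trans (h : Stab S X Y) (h' : Stab S Y Z) : Stab S X Z := by
  obtain ⟨P, Q, ⟨_, _⟩, ⟨_, _⟩, ⟨e⟩⟩ := h
  obtain ⟨P', Q', ⟨_, _⟩, ⟨_, _⟩, ⟨e'⟩⟩ := h'
  refine Stab.mk' (P × P') (Q' × Q) ⟨?_⟩
  exact (LinearEquiv.prodAssoc S X P P').symm.trans
    ((e.prodCongr (LinearEquiv.refl S P')).trans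
      ((swapR Y Q P').trans ((e'.prodCongr (LinearEquiv.refl S Q)).trans
        (LinearEquiv.prodAssoc S Z Q' Q))))

theorem split_equiv [Module.Projective S C] {f : A →ₗ[S] B} {g : B →ₗ[S] C}
    (h : IsSES f g) : Nonempty (B ≃ₗ[S] (A × C)) := by
  obtain ⟨hf, hg, hr⟩ := h
  obtain ⟨l, hl⟩ := Module.projective_lifting_property g LinearMap.id hg
  have hex : Function.Exact f g := LinearMap.exact_iff.mpr hr.symm
  exact ⟨(hex.splitSurjectiveEquiv hf ⟨l, hl⟩).1⟩

/-- Half of Schanuel. -/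
theorem schanuel_half [Module.Projective S F0] {g : F0 →ₗ[S] M} {g' : F0' →ₗ[S] M}
    {ι : K →ₗ[S] F0'} (h' : IsSES ι g') :
    Nonempty (LinearMap.ker (g.comp (LinearMap.fst S F0 F0') - g'.comp (LinearMap.snd S F0 F0'))
      ≃ₗ[S] (K × F0)) := by
  obtain ⟨h1, h2, h3⟩ := h'
  set W := LinearMap.ker (g.comp (LinearMap.fst S F0 F0') - g'.comp (LinearMap.snd S F0 F0'))
  have hk : ∀ k, g' (ι k) = 0 := fun k => by
    have : ι k ∈ LinearMap.ker g' := h3 ▸ ⟨k, rfl⟩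
    exact this
  refine split_equiv (f := LinearMap.codRestrict W ((LinearMap.inr S F0 F0').comp ι)
      (fun k => by simp [W, hk])) (g := (LinearMap.fst S F0 F0').comp W.subtype) ⟨?_, ?_, ?_⟩
  · intro a b hab
    apply h1
    exact congrArg (fun w : W => w.1.2) hab
  · intro x
    obtain ⟨y, hy⟩ := h2 (g x)
    exact ⟨⟨(x, y), by simp [W, hy]⟩, rfl⟩
  · ext ⟨⟨x, y⟩, hw⟩
    simp only [W, LinearMap.mem_ker, LinearMap.sub_apply, LinearMap.comp_apply,
      LinearMap.fst_apply, LinearMap.snd_apply] at hw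
    constructor
    · rintro ⟨k, hk⟩
      have := congrArg (fun w : W => w.1.1) hk
      exact this.symm
    · intro hx
      simp at hx
      subst hx
      have : y ∈ LinearMap.range ι := by rw [h3]; simpa using hw
      obtain ⟨k, rfl⟩ := this
      exact ⟨k, rfl⟩

theorem schanuel_same [Module.Projective S F0] [Module.Projective S F0'] [Module.Finite S F0]
    [Module.Finite S F0'] {g : F0 →ₗ[S] M} {g' : F0' →ₗ[S] M} {ι : K →ₗ[S] F0}
    {ι' : K' →ₗ[S] F0'} (h : IsSES ι g) (h' : IsSES ι' g') : Stab S K K' := by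
  obtain ⟨e1⟩ := schanuel_half (g := g) h'
  obtain ⟨e2⟩ := schanuel_half (g := g') h
  have e3 : LinearMap.ker (g.comp (LinearMap.fst S F0 F0') - g'.comp (LinearMap.snd S F0 F0'))
      ≃ₗ[S] LinearMap.ker (g'.comp (LinearMap.fst S F0' F0) - g.comp (LinearMap.snd S F0' F0)) :=
    (LinearEquiv.prodComm S F0 F0').ofSubmodules _ _ (by
      ext ⟨a, b⟩
      simp only [Submodule.mem_map, LinearMap.mem_ker, LinearMap.sub_apply, LinearMap.comp_apply,
        LinearMap.fst_apply, LinearMap.snd_apply, sub_eq_zero]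
      constructor
      · rintro ⟨⟨x, y⟩, hxy, heq⟩
        simp at heq
        obtain ⟨rfl, rfl⟩ := heq
        exact hxy.symm
      · intro hxy
        exact ⟨(b, a), hxy.symm, rfl⟩)
  exact Stab.mk' F0' F0 ⟨e2.symm.trans (e3.symm.trans e1)⟩

theorem IsSES.prod_right {ι : K →ₗ[S] F} {g : F →ₗ[S] M} (h : IsSES ι g) (P : Type u)
    [AddCommGroup P] [Module S P] :
    IsSES ((LinearMap.inl S F P).comp ι) (g.prodMap (LinearMap.id : P →ₗ[S] P)) := by
  obtain ⟨h1, h2, h3⟩ := h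
  refine ⟨?_, ?_, ?_⟩
  · intro a b hab
    exact h1 (by simpa using hab)
  · rintro ⟨m, p⟩
    obtain ⟨x, rfl⟩ := h2 m
    exact ⟨(x, p), rfl⟩
  · ext ⟨x, p⟩
    have : x ∈ LinearMap.range ι ↔ g x = 0 := by rw [h3]; rfl
    simp only [LinearMap.mem_ker, LinearMap.prodMap_apply, LinearMap.id_apply, Prod.mk_eq_zero,
      ← this, LinearMap.mem_range, LinearMap.comp_apply, LinearMap.inl_apply, Prod.mk.injEq]
    constructor
    · rintro ⟨y, h, h'⟩
      exact ⟨⟨y, h⟩, h'.symm⟩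
    · rintro ⟨⟨y, h⟩, h'⟩
      exact ⟨y, h, h'.symm⟩

theorem IsSES.comp_equiv {f : A →ₗ[S] B} {g : B →ₗ[S] C} (h : IsSES f g) (e : C ≃ₗ[S] X) :
    IsSES f (e.toLinearMap.comp g) := by
  obtain ⟨h1, h2, h3⟩ := h
  refine ⟨h1, e.surjective.comp h2, ?_⟩
  rw [h3]; ext x; simp

theorem IsSES.equiv_comp {f : A →ₗ[S] B} {g : B →ₗ[S] C} (h : IsSES f g) (e : X ≃ₗ[S] A) :
    IsSES (f.comp e.toLinearMap) g := by
  obtain ⟨h1, h2, h3⟩ := h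
  refine ⟨h1.comp e.injective, h2, ?_⟩
  rw [← h3, LinearMap.range_comp, LinearEquiv.range, Submodule.map_top]

theorem IsSES.mid_equiv {f : A →ₗ[S] B} {g : B →ₗ[S] C} (h : IsSES f g) (e : B ≃ₗ[S] X) :
    IsSES (e.toLinearMap.comp f) (g.comp e.symm.toLinearMap) := by
  obtain ⟨h1, h2, h3⟩ := h
  refine ⟨e.injective.comp h1, h2.comp e.symm.surjective, ?_⟩
  ext x
  have : e.symm x ∈ LinearMap.range f ↔ g (e.symm x) = 0 := by rw [h3]; rfl
  simp only [LinearMap.mem_ker, LinearMap.comp_apply, LinearEquiv.coe_coe, ← this,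
    LinearMap.mem_range]
  exact exists_congr fun y => (LinearEquiv.eq_symm_apply e).symm

theorem schanuel [Module.Projective S F0] [Module.Projective S F0'] [Module.Finite S F0]
    [Module.Finite S F0'] {g : F0 →ₗ[S] M} {g' : F0' →ₗ[S] M'} {ι : K →ₗ[S] F0}
    {ι' : K' →ₗ[S] F0'} (h : IsSES ι g) (h' : IsSES ι' g') (hM : Stab S M M') : Stab S K K' := by
  obtain ⟨P, Q, ⟨_, _⟩, ⟨_, _⟩, ⟨e⟩⟩ := hM
  exact schanuel_same ((h.prod_right P).comp_equiv e) (h'.prod_right Q)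

/-- Adding a redundant generator of relations adds a free summand to the transpose. -/
theorem trMap_coprod (d : F1 →ₗ[S] F0) (s : G →ₗ[S] F1) :
    Nonempty (TrMap (d.coprod (d.comp s)) ≃ₗ[S] (TrMap d × Module.Dual S G)) := by
  let to1 : Module.Dual S (F1 × G) →ₗ[S] (TrMap d × Module.Dual S G) :=
    ((LinearMap.range d.dualMap).mkQ.comp (LinearMap.inl S F1 G).dualMap).prod
      ((-s).prod LinearMap.id : G →ₗ[S] F1 × G).dualMap
  refine ⟨(Submodule.quotEquivOfEq _ (LinearMap.ker to1) ?_).trans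
    (to1.quotKerEquivOfSurjective ?_)⟩
  · ext φ
    have key : φ ∈ LinearMap.ker to1 ↔
        ((LinearMap.inl S F1 G).dualMap φ ∈ LinearMap.range d.dualMap ∧
          ((-s).prod LinearMap.id : G →ₗ[S] F1 × G).dualMap φ = 0) := by
      rw [LinearMap.mem_ker, ← Submodule.Quotient.mk_eq_zero]
      exact Prod.mk_eq_zero
    rw [key]
    constructor
    · rintro ⟨f, rfl⟩
      refine ⟨⟨f, ?_⟩, ?_⟩
      · ext x; simp
      · ext x; simp
    · rintro ⟨⟨f, hf⟩, h2⟩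
      refine ⟨f, ?_⟩
      have hf' : ∀ x, f (d x) = φ (x, 0) := fun x => by simpa using LinearMap.congr_fun hf x
      have h2' : ∀ y, φ (-s y, y) = 0 := fun x => by simpa using LinearMap.congr_fun h2 x
      apply LinearMap.ext
      rintro ⟨x, y⟩
      have : ((x, y) : F1 × G) = (x + s y, 0) + (-s y, y) := by simp
      rw [this, map_add φ, h2', ← hf']
      simp
  · rintro ⟨a, ψ⟩
    obtain ⟨φ, rfl⟩ := Submodule.mkQ_surjective _ a
    refine ⟨φ.coprod (φ.comp s + ψ), ?_⟩
    refine Prod.ext ?_ ?_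
    · change Submodule.mkQ _ _ = Submodule.mkQ _ _
      congr 1; ext x; simp
    · change ((-s).prod LinearMap.id : G →ₗ[S] F1 × G).dualMap _ = ψ
      ext x; simp

theorem trMap_congr_left {W : Type u} [AddCommGroup W] [Module S W] (d : F1 →ₗ[S] F0)
    (e : W ≃ₗ[S] F1) :
    Nonempty (TrMap (d.comp e.toLinearMap) ≃ₗ[S] TrMap d) := by
  refine ⟨Submodule.Quotient.equiv _ _ e.symm.dualMap ?_⟩
  ext φ
  constructor
  · rintro ⟨_, ⟨f, rfl⟩, rfl⟩
    exact ⟨f, by ext x; simp⟩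
  · rintro ⟨f, rfl⟩
    exact ⟨_, ⟨f, rfl⟩, by ext x; simp⟩

theorem exists_factor [Module.Projective S G] (d : F1 →ₗ[S] F0) (c : G →ₗ[S] F0)
    (h : LinearMap.range c ≤ LinearMap.range d) : ∃ s : G →ₗ[S] F1, d.comp s = c := by
  obtain ⟨s, hs⟩ := Module.projective_lifting_property d.rangeRestrict
    (c.codRestrict (LinearMap.range d) (fun x => h ⟨x, rfl⟩)) d.surjective_rangeRestrict
  refine ⟨s, ?_⟩
  ext x
  exact congrArg Subtype.val (LinearMap.congr_fun hs x)

instance dual_proj [Module.Finite S G] [Module.Projective S G] :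
    Module.Projective S (Module.Dual S G) := inferInstance

theorem trMap_same_range [Module.Finite S F1] [Module.Projective S F1] [Module.Finite S F1']
    [Module.Projective S F1'] (d : F1 →ₗ[S] F0) (d' : F1' →ₗ[S] F0)
    (h : LinearMap.range d = LinearMap.range d') : Stab S (TrMap d) (TrMap d') := by
  obtain ⟨s, hs⟩ := exists_factor d d' h.ge
  obtain ⟨s', hs'⟩ := exists_factor d' d h.le
  obtain ⟨e1⟩ := trMap_coprod d s
  obtain ⟨e2⟩ := trMap_coprod d' s'
  rw [hs] at e1
  rw [hs'] at e2
  have hc : (d'.coprod d).comp (LinearEquiv.prodComm S F1 F1').toLinearMap = d.coprod d' := by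
    ext x <;> simp
  obtain ⟨e3⟩ := trMap_congr_left (d'.coprod d) (LinearEquiv.prodComm S F1 F1')
  rw [hc] at e3
  exact Stab.mk' (Module.Dual S F1') (Module.Dual S F1) ⟨e1.symm.trans (e3.trans e2)⟩

/-- Enlarging the generators. -/
theorem trMap_enlarge (d : F1 →ₗ[S] F0) (s : G →ₗ[S] F0) :
    Nonempty (TrMap ((d.coprod (-s)).prod (LinearMap.snd S F1 G)) ≃ₗ[S] TrMap d) := by
  let to1 : Module.Dual S (F1 × G) →ₗ[S] TrMap d :=
    (LinearMap.range d.dualMap).mkQ.comp (LinearMap.inl S F1 G).dualMap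
  refine ⟨(Submodule.quotEquivOfEq _ (LinearMap.ker to1) ?_).trans
    (to1.quotKerEquivOfSurjective ?_)⟩
  · ext φ
    simp only [to1, LinearMap.mem_ker,
      LinearMap.comp_apply, Submodule.mkQ_apply, Submodule.Quotient.mk_eq_zero]
    constructor
    · rintro ⟨f, rfl⟩
      refine ⟨f.comp (LinearMap.inl S F0 G), ?_⟩
      ext x; simp
    · rintro ⟨f, hf⟩
      have hf' : ∀ x, f (d x) = φ (x, 0) := fun x => by simpa using LinearMap.congr_fun hf x
      refine ⟨f.coprod (f.comp s + φ.comp (LinearMap.inr S F1 G)), ?_⟩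
      ext x
      · have h0 : φ (0, 0) = 0 := map_zero φ
        simpa [h0] using hf' x
      · simp
  · intro a
    obtain ⟨φ, rfl⟩ := Submodule.mkQ_surjective _ a
    refine ⟨φ.coprod 0, ?_⟩
    simp only [to1, LinearMap.comp_apply]
    congr 1; ext x; simp

theorem trMap_enlarge_range (d : F1 →ₗ[S] F0) (e : F0 →ₗ[S] M) (s : G →ₗ[S] F0)
    (h : LinearMap.range d = LinearMap.ker e) :
    LinearMap.range ((d.coprod (-s)).prod (LinearMap.snd S F1 G)) =
      LinearMap.ker (e.coprod (e.comp s)) := by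
  have hd : ∀ x, e (d x) = 0 := fun x => by
    have : d x ∈ LinearMap.ker e := h ▸ ⟨x, rfl⟩
    exact this
  ext ⟨a, b⟩
  constructor
  · rintro ⟨⟨x, y⟩, hxy⟩
    simp at hxy
    obtain ⟨rfl, rfl⟩ := hxy
    simp [hd]
  · intro hab
    have : a + s b ∈ LinearMap.range d := by rw [h]; simpa using hab
    obtain ⟨x, hx⟩ := this
    exact ⟨(x, b), by simp [hx]⟩

theorem trMap_same [Module.Finite S F1] [Module.Projective S F1] [Module.Finite S F1']
    [Module.Projective S F1'] [Module.Finite S F0] [Module.Projective S F0] [Module.Finite S F0']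
    [Module.Projective S F0'] (d : F1 →ₗ[S] F0) (d' : F1' →ₗ[S] F0')
    (e : F0 →ₗ[S] M) (e' : F0' →ₗ[S] M) (he : Function.Surjective e) (he' : Function.Surjective e')
    (h : LinearMap.range d = LinearMap.ker e) (h' : LinearMap.range d' = LinearMap.ker e') :
    Stab S (TrMap d) (TrMap d') := by
  obtain ⟨s, hs⟩ := Module.projective_lifting_property e e' he
  obtain ⟨s', hs'⟩ := Module.projective_lifting_property e' e he'
  obtain ⟨e1⟩ := trMap_enlarge d s
  obtain ⟨e2⟩ := trMap_enlarge d' s'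
  have r1 := trMap_enlarge_range d e s h
  have r2 := trMap_enlarge_range d' e' s' h'
  rw [hs] at r1
  rw [hs'] at r2
  -- move second one to `F0 × F0'`
  let D' := (d'.coprod (-s')).prod (LinearMap.snd S F1' F0)
  let D'' := (LinearEquiv.prodComm S F0' F0).toLinearMap.comp D'
  have e3 : TrMap D' ≃ₗ[S] TrMap D'' := by
    refine Submodule.quotEquivOfEq _ _ ?_
    ext φ
    constructor
    · rintro ⟨f, rfl⟩
      exact ⟨f.comp (LinearEquiv.prodComm S F0' F0).symm.toLinearMap, by ext x <;> simp [D'']⟩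
    · rintro ⟨f, rfl⟩
      exact ⟨f.comp (LinearEquiv.prodComm S F0' F0).toLinearMap, by ext x <;> simp [D'']⟩
  have r3 : LinearMap.range D'' = LinearMap.ker (e.coprod e') := by
    simp only [D'']
    rw [LinearMap.range_comp, r2]
    ext ⟨a, b⟩
    simp [Submodule.mem_map, add_comm]
  exact (Stab.of_equiv e1.symm).trans ((trMap_same_range _ D'' (r1.trans r3.symm)).trans
    (Stab.of_equiv (e3.symm.trans e2)))

theorem trMap_prod_right (d : F1 →ₗ[S] F0) (P : Type u) [AddCommGroup P] [Module S P] :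
    Nonempty (TrMap d ≃ₗ[S] TrMap ((LinearMap.inl S F0 P).comp d)) := by
  refine ⟨Submodule.quotEquivOfEq _ _ ?_⟩
  ext φ
  constructor
  · rintro ⟨f, rfl⟩
    exact ⟨f.coprod 0, by ext x; simp⟩
  · rintro ⟨f, rfl⟩
    exact ⟨f.comp (LinearMap.inl S F0 P), by ext x; simp⟩

theorem range_prod_right (d : F1 →ₗ[S] F0) (e : F0 →ₗ[S] M) (P : Type u) [AddCommGroup P]
    [Module S P] (h : LinearMap.range d = LinearMap.ker e) :
    LinearMap.range ((LinearMap.inl S F0 P).comp d) =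
      LinearMap.ker (e.prodMap (LinearMap.id : P →ₗ[S] P)) := by
  rw [LinearMap.range_comp, h]
  ext ⟨x, p⟩
  simp [Submodule.mem_map, eq_comm]

theorem trMap_stab [Module.Finite S F1] [Module.Projective S F1] [Module.Finite S F1']
    [Module.Projective S F1'] [Module.Finite S F0] [Module.Projective S F0] [Module.Finite S F0']
    [Module.Projective S F0'] (d : F1 →ₗ[S] F0) (d' : F1' →ₗ[S] F0')
    (e : F0 →ₗ[S] M) (e' : F0' →ₗ[S] M') (he : Function.Surjective e)
    (he' : Function.Surjective e')
    (h : LinearMap.range d = LinearMap.ker e) (h' : LinearMap.range d' = LinearMap.ker e')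
    (hM : Stab S M M') : Stab S (TrMap d) (TrMap d') := by
  obtain ⟨P, Q, ⟨_, _⟩, ⟨_, _⟩, ⟨u⟩⟩ := hM
  obtain ⟨e1⟩ := trMap_prod_right d P
  obtain ⟨e2⟩ := trMap_prod_right d' Q
  refine (Stab.of_equiv e1).trans (Stab.trans ?_ (Stab.of_equiv e2.symm))
  refine trMap_same _ _ (u.toLinearMap.comp (e.prodMap (LinearMap.id : P →ₗ[S] P)))
    (e'.prodMap (LinearMap.id : Q →ₗ[S] Q)) (u.surjective.comp ?_) ?_ ?_
    (range_prod_right d' e' Q h')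
  · exact he.prodMap Function.surjective_id
  · exact he'.prodMap Function.surjective_id
  · rw [range_prod_right d e P h]
    ext x; simp

theorem IsSES.zero {f : A →ₗ[S] B} {g : B →ₗ[S] C} (h : IsSES f g) (x : A) : g (f x) = 0 := by
  have : f x ∈ LinearMap.ker g := h.2.2 ▸ ⟨x, rfl⟩
  exact this

theorem IsSES.exists_of_zero {f : A →ₗ[S] B} {g : B →ₗ[S] C} (h : IsSES f g) (y : B)
    (hy : g y = 0) : ∃ x, f x = y := by
  have : y ∈ LinearMap.range f := by rw [h.2.2]; exact hy
  exact this

theorem IsSES.mk' {f : A →ₗ[S] B} {g : B →ₗ[S] C} (h1 : Function.Injective f)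
    (h2 : Function.Surjective g) (h3 : ∀ x, g (f x) = 0) (h4 : ∀ y, g y = 0 → ∃ x, f x = y) :
    IsSES f g := by
  refine ⟨h1, h2, ?_⟩
  ext y
  constructor
  · rintro ⟨x, rfl⟩
    exact h3 x
  · intro hy
    exact h4 y hy

theorem factor_surj (g : A →ₗ[S] B) (hg : Function.Surjective g) (φ : A →ₗ[S] C)
    (h : ∀ x, g x = 0 → φ x = 0) : ∃ ψ : B →ₗ[S] C, ψ.comp g = φ := by
  refine ⟨((LinearMap.ker g).liftQ φ (fun x hx => h x hx)).comp
    (g.quotKerEquivOfSurjective hg).symm.toLinearMap, ?_⟩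
  ext x
  have : (g.quotKerEquivOfSurjective hg).symm (g x) = Submodule.Quotient.mk x := by
    rw [LinearEquiv.symm_apply_eq]; rfl
  change (LinearMap.ker g).liftQ φ (fun x hx => h x hx) ((g.quotKerEquivOfSurjective hg).symm (g x)) = φ x
  rw [this]
  rfl

theorem factor_inj (f : A →ₗ[S] B) (hf : Function.Injective f) (φ : C →ₗ[S] B)
    (h : ∀ x, ∃ y, f y = φ x) : ∃ ψ : C →ₗ[S] A, f.comp ψ = φ := by
  refine ⟨(LinearEquiv.ofInjective f hf).symm.toLinearMap.comp
    (φ.codRestrict (LinearMap.range f) h), ?_⟩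
  ext x
  have := LinearEquiv.apply_symm_apply (LinearEquiv.ofInjective f hf)
    (φ.codRestrict (LinearMap.range f) h x)
  exact congrArg Subtype.val this

theorem horseshoe [Module.Projective S Q] {α : A →ₗ[S] Z} {β : Z →ₗ[S] K} (h : IsSES α β)
    (p : P →ₗ[S] A) (hp : Function.Surjective p) (q : Q →ₗ[S] K) (hq : Function.Surjective q) :
    ∃ w : P × Q →ₗ[S] Z, Function.Surjective w ∧ (∀ x, w (x, 0) = α (p x)) ∧
      (∀ z, β (w z) = q z.2) := by
  obtain ⟨σ, hσ⟩ := Module.projective_lifting_property β q h.2.1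
  have hσ' : ∀ y, β (σ y) = q y := fun y => LinearMap.congr_fun hσ y
  refine ⟨(α.comp p).coprod σ, ?_, ?_, ?_⟩
  · intro z
    obtain ⟨y, hy⟩ := hq (β z)
    obtain ⟨a, ha⟩ := h.exists_of_zero (z - σ y) (by rw [map_sub, hσ', hy, sub_self])
    obtain ⟨x, rfl⟩ := hp a
    exact ⟨(x, y), by simp [ha]⟩
  · intro x; simp
  · rintro ⟨x, y⟩; simp [h.zero, hσ']

theorem horseshoe_ker {E' : Type u} [AddCommGroup E'] [Module S E']
    {α : A →ₗ[S] Z} {β : Z →ₗ[S] K} (h : IsSES α β)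
    {p : P →ₗ[S] A} {q : Q →ₗ[S] K} {ιE : E' →ₗ[S] P} {ιK : K' →ₗ[S] Q}
    (hE : IsSES ιE p) (hK : IsSES ιK q) (w : P × Q →ₗ[S] Z)
    (h1 : ∀ x, w (x, 0) = α (p x)) (h2 : ∀ z, β (w z) = q z.2) :
    ∃ (α' : E' →ₗ[S] LinearMap.ker w) (β' : LinearMap.ker w →ₗ[S] K'), IsSES α' β' ∧
      (∀ x, (α' x : P × Q) = (ιE x, 0)) ∧ (∀ z, ιK (β' z) = (z : P × Q).2) := by
  obtain ⟨β', hβ'⟩ := factor_inj ιK hK.1 ((LinearMap.snd S P Q).comp (LinearMap.ker w).subtype)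
    (by
      rintro ⟨z, hz⟩
      apply hK.exists_of_zero
      have := h2 z
      rw [LinearMap.mem_ker.mp hz, map_zero] at this
      exact this.symm)
  have hβ : ∀ z, ιK (β' z) = (z : P × Q).2 := fun z => LinearMap.congr_fun hβ' z
  refine ⟨((LinearMap.inl S P Q).comp ιE).codRestrict (LinearMap.ker w) (fun x => by
    simp [h1, hE.zero]), β', IsSES.mk' ?_ ?_ ?_ ?_, fun x => rfl, hβ⟩
  · intro a b hab
    exact hE.1 (congrArg (fun z : LinearMap.ker w => z.1.1) hab)
  · intro k
    obtain ⟨a, ha⟩ := h.exists_of_zero (w (0, ιK k)) (by rw [h2]; exact hK.zero k)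
    obtain ⟨x, rfl⟩ := hE.2.1 a
    refine ⟨⟨(-x, ιK k), ?_⟩, hK.1 (hβ _)⟩
    have : ((-x, ιK k) : P × Q) = (0, ιK k) - (x, 0) := by simp
    rw [LinearMap.mem_ker, this, map_sub, h1, ha, sub_self]
  · intro x
    apply hK.1
    exact (hβ _).trans (map_zero ιK).symm
  · rintro ⟨⟨x, y⟩, hz⟩ h0
    have hy : y = 0 := by
      have := hβ ⟨(x, y), hz⟩
      rw [h0, map_zero] at this
      exact this.symm
    subst hy
    rw [LinearMap.mem_ker, h1] at hz
    obtain ⟨e, he⟩ := hE.exists_of_zero x (h.1 (by rw [hz, map_zero]))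
    exact ⟨e, Subtype.ext (Prod.ext he rfl)⟩

/-- The exact sequence of transposes. -/
theorem tr_ses {P0 P1 Q0 Q1 : Type u} [AddCommGroup P0] [Module S P0] [AddCommGroup P1]
    [Module S P1] [AddCommGroup Q0] [Module S Q0] [AddCommGroup Q1] [Module S Q1]
    [Module.Projective S Q0] [Module.Projective S Q1]
    {α : A →ₗ[S] Z} {β : Z →ₗ[S] K} (h : IsSES α β)
    (hext : ∀ φ : A →ₗ[S] S, ∃ ψ : Z →ₗ[S] S, ψ.comp α = φ)
    (dP : P1 →ₗ[S] P0) (eP : P0 →ₗ[S] A) (dQ : Q1 →ₗ[S] Q0) (eQ : Q0 →ₗ[S] K)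
    (heP : Function.Surjective eP) (heQ : Function.Surjective eQ)
    (hP : LinearMap.range dP = LinearMap.ker eP) (hQ : LinearMap.range dQ = LinearMap.ker eQ) :
    ∃ (dZ : P1 × Q1 →ₗ[S] P0 × Q0) (w : P0 × Q0 →ₗ[S] Z), Function.Surjective w ∧
      LinearMap.range dZ = LinearMap.ker w ∧
      ∃ (f : TrMap dQ →ₗ[S] TrMap dZ) (g : TrMap dZ →ₗ[S] TrMap dP), IsSES f g := by
  obtain ⟨w, hw, hw1, hw2⟩ := horseshoe h eP heP eQ heQ
  obtain ⟨α', β', h', ha, hb⟩ := horseshoe_ker (ιE := (LinearMap.range dP).subtype)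
    (ιK := (LinearMap.range dQ).subtype) h
    ⟨Submodule.injective_subtype _, heP, by rw [Submodule.range_subtype, hP]⟩
    ⟨Submodule.injective_subtype _, heQ, by rw [Submodule.range_subtype, hQ]⟩ w hw1 hw2
  obtain ⟨v, hv, hv1, hv2⟩ := horseshoe h' dP.rangeRestrict dP.surjective_rangeRestrict
    dQ.rangeRestrict dQ.surjective_rangeRestrict
  let dZ : P1 × Q1 →ₗ[S] P0 × Q0 := (LinearMap.ker w).subtype.comp v
  have hd1 : ∀ x, dZ (x, 0) = (dP x, 0) := fun x => by
    change ((v (x, 0) : LinearMap.ker w) : P0 × Q0) = _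
    rw [hv1, ha]; rfl
  have hd2 : ∀ z, (dZ z).2 = dQ z.2 := fun z => by
    change ((v z : LinearMap.ker w) : P0 × Q0).2 = _
    rw [← hb, hv2]; rfl
  have hrange : LinearMap.range dZ = LinearMap.ker w := by
    simp only [dZ]
    rw [LinearMap.range_comp, LinearMap.range_eq_top.mpr hv, Submodule.map_top,
      Submodule.range_subtype]
  have hwd : ∀ z, w (dZ z) = 0 := fun z => (v z).2
  have hf : LinearMap.range dQ.dualMap ≤
      (LinearMap.range dZ.dualMap).comap (LinearMap.snd S P1 Q1).dualMap := by
    rintro _ ⟨g, rfl⟩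
    refine ⟨g.comp (LinearMap.snd S P0 Q0), ?_⟩
    apply LinearMap.ext
    intro z
    simp [hd2]
  have hg : LinearMap.range dZ.dualMap ≤
      (LinearMap.range dP.dualMap).comap (LinearMap.inl S P1 Q1).dualMap := by
    rintro _ ⟨g, rfl⟩
    refine ⟨g.comp (LinearMap.inl S P0 Q0), ?_⟩
    apply LinearMap.ext
    intro z
    simp [hd1]
  refine ⟨dZ, w, hw, hrange, Submodule.mapQ _ _ _ hf, Submodule.mapQ _ _ _ hg,
    IsSES.mk' ?_ ?_ ?_ ?_⟩
  · rw [injective_iff_map_eq_zero]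
    intro a h0
    obtain ⟨ψ, rfl⟩ := Submodule.mkQ_surjective _ a
    simp only [Submodule.mkQ_apply, Submodule.mapQ_apply, Submodule.Quotient.mk_eq_zero] at h0 ⊢
    obtain ⟨F, hF⟩ := h0
    have hF' : ∀ z, F (dZ z) = ψ z.2 := fun z => LinearMap.congr_fun hF z
    have hker : ∀ x, eP x = 0 → F (x, 0) = 0 := by
      intro x hx
      have : x ∈ LinearMap.range dP := by rw [hP]; exact hx
      obtain ⟨y, rfl⟩ := this
      rw [← hd1, hF', map_zero]
    obtain ⟨φ, hφ⟩ := factor_surj eP heP (F.comp (LinearMap.inl S P0 Q0)) hker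
    obtain ⟨χ, hχ⟩ := hext φ
    have hχ' : ∀ x, χ (w (x, 0)) = F (x, 0) := fun x => by
      rw [hw1]
      have e1 := LinearMap.congr_fun hχ (eP x)
      have e2 := LinearMap.congr_fun hφ x
      simp only [LinearMap.comp_apply, LinearMap.inl_apply] at e1 e2
      rw [e1, e2]
    refine ⟨(F - χ.comp w).comp (LinearMap.inr S P0 Q0), ?_⟩
    apply LinearMap.ext
    intro y
    have e1 : F (dZ (0, y)) - χ (w (dZ (0, y))) = ψ y := by
      rw [hwd, map_zero, sub_zero, hF']
    have e2 : dZ (0, y) = ((dZ (0, y)).1, 0) + (0, dQ y) := by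
      have := hd2 (0, y)
      ext <;> simp [this]
    rw [e2, map_add, map_add, map_add, hχ'] at e1
    simp only [LinearMap.dualMap_apply, LinearMap.comp_apply, LinearMap.inr_apply,
      LinearMap.sub_apply]
    rw [← e1]; abel
  · intro a
    obtain ⟨φ, rfl⟩ := Submodule.mkQ_surjective _ a
    refine ⟨Submodule.Quotient.mk (φ.comp (LinearMap.fst S P1 Q1)), ?_⟩
    rw [Submodule.mapQ_apply]
    change Submodule.mkQ _ _ = Submodule.mkQ _ _
    congr 1
  · intro a
    obtain ⟨φ, rfl⟩ := Submodule.mkQ_surjective _ a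
    simp only [Submodule.mkQ_apply, Submodule.mapQ_apply, Submodule.Quotient.mk_eq_zero]
    refine ⟨0, ?_⟩
    ext x; simp
  · intro a h0
    obtain ⟨φ, rfl⟩ := Submodule.mkQ_surjective _ a
    simp only [Submodule.mkQ_apply, Submodule.mapQ_apply, Submodule.Quotient.mk_eq_zero] at h0
    obtain ⟨f, hf0⟩ := h0
    have hf' : ∀ x, f (dP x) = φ (x, 0) := fun x => LinearMap.congr_fun hf0 x
    let φ' : Module.Dual S (P1 × Q1) := φ - (f.comp (LinearMap.fst S P0 Q0)).comp dZ
    refine ⟨Submodule.Quotient.mk (φ'.comp (LinearMap.inr S P1 Q1)), ?_⟩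
    rw [Submodule.mapQ_apply, Submodule.mkQ_apply, Submodule.Quotient.eq]
    refine ⟨-f.comp (LinearMap.fst S P0 Q0), ?_⟩
    apply LinearMap.ext
    rintro ⟨x, y⟩
    have e : ((x, y) : P1 × Q1) = (x, 0) + (0, y) := by simp
    simp only [φ', LinearMap.dualMap_apply, LinearMap.neg_apply, LinearMap.comp_apply,
      LinearMap.fst_apply, LinearMap.sub_apply, LinearMap.snd_apply, LinearMap.inr_apply]
    rw [e, map_add dZ, map_add φ, hd1, Prod.fst_add, map_add f, hf']
    ring

/-- Replace the cokernel by a stably isomorphic module. -/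
theorem ses_stab {α : A →ₗ[S] Z} {β : Z →ₗ[S] K} (h : IsSES α β) (hK : Stab S K K') :
    ∃ (Z' : ModuleCat.{u} S) (α' : A →ₗ[S] Z') (β' : Z' →ₗ[S] K'), IsSES α' β' ∧
      Stab S Z' Z := by
  obtain ⟨P, Q, ⟨_, _⟩, ⟨_, _⟩, ⟨u⟩⟩ := hK
  have h1 := (h.prod_right P).comp_equiv u
  set a1 := (LinearMap.inl S Z P).comp α
  set b1 := u.toLinearMap.comp (β.prodMap (LinearMap.id : P →ₗ[S] P))
  let W := LinearMap.ker ((LinearMap.snd S K' Q).comp b1)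
  refine ⟨ModuleCat.of S W, a1.codRestrict W (fun x => ?_),
    ((LinearMap.fst S K' Q).comp b1).comp W.subtype, IsSES.mk' ?_ ?_ ?_ ?_, ?_⟩
  · have := h1.zero x
    simp [W, this]
  · intro x y hxy
    exact h1.1 (congrArg Subtype.val hxy)
  · intro k
    obtain ⟨z, hz⟩ := h1.2.1 (k, 0)
    exact ⟨⟨z, by simp [W, hz]⟩, by simp [hz]⟩
  · intro x
    have := h1.zero x
    simp [this]
  · rintro ⟨z, hz⟩ h0
    obtain ⟨x, hx⟩ := h1.exists_of_zero z (Prod.ext h0 hz)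
    exact ⟨x, Subtype.ext hx⟩
  · have hs : IsSES W.subtype ((LinearMap.snd S K' Q).comp b1) :=
      ⟨Submodule.injective_subtype _, Prod.snd_surjective.comp h1.2.1,
        Submodule.range_subtype _⟩
    obtain ⟨e⟩ := split_equiv hs
    exact Stab.mk' Q P ⟨e.symm⟩

/-- Multiplication by `r` factors through a projective module. -/
def FactProj (r : S) (X : Type u) [AddCommGroup X] [Module S X] : Prop :=
  ∃ (F : ModuleCat.{u} S) (a : X →ₗ[S] F) (b : F →ₗ[S] X), Module.Projective S F ∧
    ∀ x, b (a x) = r • x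

theorem FactProj.extend {r : S} (hr : FactProj r M) [Module.Projective S F]
    {ι : K →ₗ[S] F} {g : F →ₗ[S] M} (h : IsSES ι g) : ∃ s : F →ₗ[S] K, ∀ x, s (ι x) = r • x := by
  obtain ⟨G, a, b, _, hab⟩ := hr
  obtain ⟨b', hb'⟩ := Module.projective_lifting_property g b h.2.1
  have hb : ∀ x, g (b' x) = b x := fun x => LinearMap.congr_fun hb' x
  obtain ⟨s, hs⟩ := factor_inj ι h.1 (r • LinearMap.id - (b'.comp a).comp g) (by
    intro x
    apply h.exists_of_zero
    simp [hb, hab])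
  refine ⟨s, fun x => h.1 ?_⟩
  have := LinearMap.congr_fun hs (ι x)
  simpa [h.zero] using this

theorem FactProj.syz {r : S} (hr : FactProj r M) [Module.Projective S F]
    {ι : K →ₗ[S] F} {g : F →ₗ[S] M} (h : IsSES ι g) : FactProj r K := by
  obtain ⟨s, hs⟩ := hr.extend h
  exact ⟨ModuleCat.of S F, ι, s, ‹_›, hs⟩

theorem trMap_functional [IsLocalRing S] [Module.Finite S F1] [Module.Free S F1]
    [Module.Free S F0] (d : F1 →ₗ[S] F0)
    (h : LinearMap.ker d ≤ (IsLocalRing.maximalIdeal S) • (⊤ : Submodule S F1))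
    (φ : TrMap d →ₗ[S] S) (b : TrMap d) : φ b ∈ IsLocalRing.maximalIdeal S := by
  obtain ⟨ψ, rfl⟩ := Submodule.mkQ_surjective _ b
  obtain ⟨x, hx⟩ := (Module.evalEquiv S F1).surjective (φ.comp (LinearMap.range d.dualMap).mkQ)
  have hx' : ∀ χ : Module.Dual S F1, φ (Submodule.mkQ _ χ) = χ x := fun χ =>
    (LinearMap.congr_fun hx χ).symm
  have hd : d x = 0 := by
    rw [← Module.forall_dual_apply_eq_zero_iff S]
    intro f
    have := hx' (d.dualMap f)
    rw [show (LinearMap.range d.dualMap).mkQ (d.dualMap f) = 0 from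
      (Submodule.Quotient.mk_eq_zero _).mpr ⟨f, rfl⟩, map_zero] at this
    exact this.symm
  rw [hx']
  have hm : x ∈ (IsLocalRing.maximalIdeal S) • (⊤ : Submodule S F1) := h hd
  have : ψ x ∈ Submodule.map ψ ((IsLocalRing.maximalIdeal S) • (⊤ : Submodule S F1)) :=
    ⟨x, hm, rfl⟩
  rw [Submodule.map_smul''] at this
  exact Submodule.smul_le_of_le_left this
where
  Submodule.smul_le_of_le_left {I : Ideal S} {N : Submodule S S} {x : S} (h : x ∈ I • N) :
      x ∈ I := by
    have : I • N ≤ I := by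
      rw [Submodule.smul_le]
      intro r hr n _
      exact I.mul_mem_right n hr
    exact this h

theorem cancel_free [IsLocalRing S] [Module.Finite S P] [Module.Projective S P]
    [Module.Finite S Q] [Module.Projective S Q] (e : (X × P) ≃ₗ[S] (B × Q))
    (hB : ∀ (φ : B →ₗ[S] S) (b : B), φ b ∈ IsLocalRing.maximalIdeal S) :
    ∃ k : ℕ, Nonempty (X ≃ₗ[S] (B × (Fin k → S))) := by
  have : Module.Free S P := Module.free_of_flat_of_isLocalRing
  let π : B × Q →ₗ[S] P := (LinearMap.snd S X P).comp e.symm.toLinearMap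
  have hπ : Function.Surjective π := Prod.snd_surjective.comp e.symm.surjective
  have hm : ∀ b, π (b, 0) ∈ (IsLocalRing.maximalIdeal S) • (⊤ : Submodule S P) := by
    intro b
    let bs := Module.Free.chooseBasis S P
    rw [← bs.sum_repr (π (b, 0))]
    refine Submodule.sum_mem _ fun j _ => Submodule.smul_mem_smul ?_ trivial
    exact hB ((bs.coord j).comp (π.comp (LinearMap.inl S B Q))) b
  let ρ : Q →ₗ[S] P := π.comp (LinearMap.inr S B Q)
  have hρ : Function.Surjective ρ := by
    rw [← LinearMap.range_eq_top, ← top_le_iff]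
    refine Submodule.le_of_le_smul_of_le_jacobson_bot (I := IsLocalRing.maximalIdeal S)
      Module.Finite.fg_top (IsLocalRing.maximalIdeal_le_jacobson _) ?_
    rintro y -
    obtain ⟨⟨b, q⟩, rfl⟩ := hπ y
    have : ((b, q) : B × Q) = (0, q) + (b, 0) := by simp
    rw [this, map_add]
    exact Submodule.add_mem_sup ⟨q, rfl⟩ (hm b)
  obtain ⟨σ, hσ⟩ := Module.projective_lifting_property ρ LinearMap.id hρ
  have hσ' : ∀ y, π (0, σ y) = y := fun y => LinearMap.congr_fun hσ y
  let L := LinearMap.ker ρ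
  have hL : IsSES L.subtype ρ := ⟨Submodule.injective_subtype _, hρ, Submodule.range_subtype _⟩
  obtain ⟨eL⟩ := split_equiv hL
  have hLp : Module.Projective S L := Module.Projective.of_split
    (eL.symm.toLinearMap.comp (LinearMap.inl S L P)) ((LinearMap.fst S L P).comp eL.toLinearMap)
    (by ext x; simp)
  have hLf : Module.Finite S L := Module.Finite.of_surjective
    ((LinearMap.fst S L P).comp eL.toLinearMap) (Prod.fst_surjective.comp eL.surjective)
  have : Module.Free S L := Module.free_of_flat_of_isLocalRing
  refine ⟨Module.finrank S L, ⟨?_⟩⟩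
  let eF : L ≃ₗ[S] (Fin (Module.finrank S L) → S) := (Module.finBasis S L).equivFun
  let j1 : X →ₗ[S] B × Q := e.toLinearMap.comp (LinearMap.inl S X P)
  let j2 : B × L →ₗ[S] B × Q :=
    (LinearMap.fst S B L).prod (L.subtype.comp (LinearMap.snd S B L) -
      (σ.comp (π.comp (LinearMap.inl S B Q))).comp (LinearMap.fst S B L))
  have h1 : Function.Injective j1 := e.injective.comp LinearMap.inl_injective
  have hj2 : ∀ b l, j2 (b, l) = (b, (l : Q) - σ (π (b, 0))) := fun b l => rfl
  have h2 : Function.Injective j2 := by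
    rintro ⟨b, l⟩ ⟨b', l'⟩ hbl
    rw [hj2, hj2, Prod.mk.injEq] at hbl
    obtain ⟨rfl, h⟩ := hbl
    exact Prod.ext rfl (Subtype.ext (sub_left_injective h))
  have r1 : LinearMap.range j1 = LinearMap.ker π := by
    ext z
    constructor
    · rintro ⟨x, rfl⟩
      simp [π, j1]
    · intro hz
      refine ⟨(e.symm z).1, ?_⟩
      have hz' : (e.symm z).2 = 0 := hz
      change e ((e.symm z).1, 0) = z
      rw [← hz']
      simp
  have r2 : LinearMap.range j2 = LinearMap.ker π := by
    ext ⟨b, q⟩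
    have hsum : ∀ b q, π (b, q) = π (b, 0) + π (0, q) := fun b q => by rw [← map_add]; simp
    constructor
    · rintro ⟨⟨b', l⟩, hl⟩
      rw [hj2] at hl
      rw [LinearMap.mem_ker, ← hl, hsum]
      have : π (0, (l : Q) - σ (π (b', 0))) = π (0, (l : Q)) - π (0, σ (π (b', 0))) := by
        rw [← map_sub]; simp
      have hl0 : π (0, (l : Q)) = 0 := l.2
      rw [this, hσ', hl0]
      simp
    · intro hz
      rw [LinearMap.mem_ker, hsum] at hz
      refine ⟨(b, ⟨q + σ (π (b, 0)), ?_⟩), ?_⟩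
      · change π (0, q + σ (π (b, 0))) = 0
        have : π (0, q + σ (π (b, 0))) = π (0, q) + π (0, σ (π (b, 0))) := by
          rw [← map_add]; simp
        rw [this, hσ', add_comm, hz]
      · rw [hj2]; simp
  exact (LinearEquiv.ofInjective j1 h1).trans
    ((LinearEquiv.ofEq _ _ (r1.trans r2.symm)).trans
      ((LinearEquiv.ofInjective j2 h2).symm.trans ((LinearEquiv.refl S B).prodCongr eF)))

theorem exists_factProj_of_locally_free [IsNoetherianRing S] [IsLocalRing S] [Module.Finite S M]
    (hfree : ∀ p : PrimeSpectrum S, p.asIdeal ≠ IsLocalRing.maximalIdeal S →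
      Module.Free (Localization.AtPrime p.asIdeal) (LocalizedModule p.asIdeal.primeCompl M))
    (x : S) (hx : x ∈ IsLocalRing.maximalIdeal S) : ∃ k : ℕ, FactProj (x ^ k) M := by
  have : Module.FinitePresentation S M := Module.finitePresentation_of_finite S M
  obtain ⟨n, π, hπ⟩ := Module.Finite.exists_fin' S M
  let J : Ideal S := Submodule.comap (LinearMap.toSpanSingleton S (M →ₗ[S] M) LinearMap.id)
    (LinearMap.range (LinearMap.compRight S (M := M) π))
  have hJ : ∀ r, r ∈ J ↔ ∃ a : M →ₗ[S] (Fin n → S), π.comp a = r • LinearMap.id := fun r => by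
    simp only [J, Submodule.mem_comap, LinearMap.mem_range, LinearMap.toSpanSingleton_apply]
    rfl
  have key : x ∈ J.radical := by
    rw [Ideal.radical_eq_sInf, Submodule.mem_sInf]
    rintro p ⟨hJp, hp⟩
    by_contra hxp
    have hpm : p ≠ IsLocalRing.maximalIdeal S := fun h => hxp (h ▸ hx)
    have hfr := hfree ⟨p, hp⟩ hpm
    have : Ideal.IsPrime p := hp
    let T := Ideal.primeCompl p
    let fM := LocalizedModule.mkLinearMap T M
    let fN := LocalizedModule.mkLinearMap T (Fin n → S)
    let πp := LocalizedModule.map T π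
    have hπp : Function.Surjective πp := LocalizedModule.map_surjective T π hπ
    obtain ⟨σ, hσ⟩ := Module.projective_lifting_property πp LinearMap.id hπp
    obtain ⟨a, s, has⟩ := Module.FinitePresentation.exists_lift_of_isLocalizedModule T fN
      ((σ.restrictScalars S).comp fM)
    have h1 : fM.comp (π.comp a) = fM.comp ((s : S) • LinearMap.id) := by
      ext m
      have e1 : fM (π (a m)) = πp (fN (a m)) := (LocalizedModule.map_mk T π (a m) 1).symm
      have e2 : fN (a m) = s • σ (fM m) := LinearMap.congr_fun has m
      have e3 : πp (σ (fM m)) = fM m := LinearMap.congr_fun hσ (fM m)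
      change fM (π (a m)) = fM ((s : S) • m)
      rw [e1, e2, map_smul fM]
      have e4 : s • σ (fM m) = (algebraMap S (Localization T) s) • σ (fM m) := by
        rw [algebraMap_smul]; rfl
      rw [e4, map_smul, algebraMap_smul, e3]
    obtain ⟨s', hs'⟩ := Module.Finite.exists_smul_of_comp_eq_of_isLocalizedModule T fM _ _ h1
    have : (s' : S) * s ∈ J := by
      rw [hJ]
      refine ⟨(s' : S) • a, ?_⟩
      rw [LinearMap.comp_smul, mul_smul]
      exact hs'
    rcases hp.mem_or_mem (hJp this) with h | h
    · exact s'.2 h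
    · exact s.2 h
  obtain ⟨k, hk⟩ := key
  obtain ⟨a, ha⟩ := (hJ _).mp hk
  exact ⟨k, ModuleCat.of S (Fin n → S), a, π, inferInstanceAs (Module.Projective S (Fin n → S)),
    fun m => LinearMap.congr_fun ha m⟩

end

open scoped Pointwise

/-- Elementary form of the vanishing of `Ext^n(E, N)`. -/
def ExtVan (N : Type u) [AddCommGroup N] [Module S N] : ℕ → ModuleCat.{u} S → Prop
  | 0, E => ∀ φ : E →ₗ[S] N, φ = 0
  | 1, E => ∀ (F K : ModuleCat.{u} S) (ι : K →ₗ[S] F) (g : F →ₗ[S] E),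
      Module.Projective S F → IsSES ι g → ∀ φ : K →ₗ[S] N, ∃ ψ : F →ₗ[S] N, ψ.comp ι = φ
  | n + 2, E => ∀ (F K : ModuleCat.{u} S) (ι : K →ₗ[S] F) (g : F →ₗ[S] E),
      Module.Projective S F → IsSES ι g → ExtVan N (n + 1) K

theorem exists_smul_of_mk_zero {F N : Type u} [AddCommGroup F] [Module S F] [AddCommGroup N]
    [Module S N] [Module.Projective S F] (x : S) (ψ : F →ₗ[S] N)
    (h : ∀ y, (Submodule.Quotient.mk (ψ y) : QuotSMulTop x N) = 0) :
    ∃ θ : F →ₗ[S] N, ψ = x • θ := by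
  obtain ⟨θ, hθ⟩ := exists_factor (x • (LinearMap.id : N →ₗ[S] N)) ψ (by
    rintro _ ⟨y, rfl⟩
    have := (Submodule.Quotient.mk_eq_zero _).mp (h y)
    rw [Submodule.mem_smul_pointwise_iff_exists] at this
    obtain ⟨n, -, hn⟩ := this
    exact ⟨n, hn⟩)
  refine ⟨θ, ?_⟩
  rw [← hθ]
  ext y
  simp

theorem descend_s15 {F K N : Type u} [AddCommGroup F] [Module S F] [AddCommGroup K] [Module S K]
    [AddCommGroup N] [Module S N] [Module.Projective S F] (x : S)
    (hx : IsSMulRegular N x) (ι : K →ₗ[S] F) (φ : K →ₗ[S] N)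
    (H : ∀ ψ : F →ₗ[S] N,
      (∀ y, (Submodule.Quotient.mk (ψ (ι y)) : QuotSMulTop x N) = 0) →
        ∃ χ : F →ₗ[S] N, (∀ y, χ (ι y) = 0) ∧
          ∀ y, (Submodule.Quotient.mk ((ψ - χ) y) : QuotSMulTop x N) = 0) (a : ℕ) :
    (∃ ψ : F →ₗ[S] N, ψ.comp ι = x ^ a • φ) → ∃ ψ : F →ₗ[S] N, ψ.comp ι = φ := by
  induction a with
  | zero => simp
  | succ a ih =>
    rintro ⟨ψ, hψ⟩
    apply ih
    have hψ' : ∀ y, ψ (ι y) = x • (x ^ a • φ y) := fun y => by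
      rw [smul_smul, ← pow_succ']
      exact LinearMap.congr_fun hψ y
    obtain ⟨χ, h1, h2⟩ := H ψ (fun y => by
      rw [hψ', Submodule.Quotient.mk_eq_zero]
      exact Submodule.smul_mem_pointwise_smul _ _ _ trivial)
    obtain ⟨θ, hθ⟩ := exists_smul_of_mk_zero x (ψ - χ) h2
    refine ⟨θ, ?_⟩
    ext y
    apply hx
    have := LinearMap.congr_fun hθ (ι y)
    simp only [LinearMap.sub_apply, h1, sub_zero, LinearMap.smul_apply, hψ'] at this
    exact this.symm

theorem extVan_step {N : Type u} [AddCommGroup N] [Module S N] (x : S) (hx : IsSMulRegular N x)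
    (k : ℕ) (n : ℕ) : ∀ E : ModuleCat.{u} S, FactProj (x ^ k) E →
      ExtVan (QuotSMulTop x N) n E → ExtVan N (n + 1) E := by
  induction n with
  | zero =>
    intro E hE hV F K ι g _ hs φ
    obtain ⟨s, hs'⟩ := hE.extend hs
    refine descend_s15 x hx ι φ ?_ k ⟨φ.comp s, by ext y; simp [hs']⟩
    intro ψ hψ
    refine ⟨0, by simp, ?_⟩
    obtain ⟨χ, hχ⟩ := factor_surj g hs.2.1
      ((Submodule.mkQ (x • (⊤ : Submodule S N))).comp ψ) (by
        intro y hy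
        obtain ⟨z, rfl⟩ := hs.exists_of_zero y hy
        exact hψ z)
    have h0 : χ = 0 := hV χ
    intro y
    have := LinearMap.congr_fun hχ y
    rw [h0] at this
    simpa using this.symm
  | succ n ih =>
    intro E hE hV
    cases n with
    | zero =>
      intro F K ι g _ hs F' K' ι' g' _ hs' φ
      obtain ⟨s, hs2⟩ := (hE.syz hs).extend hs'
      refine descend_s15 x hx ι' φ ?_ k ⟨φ.comp s, by ext y; simp [hs2]⟩
      intro ψ hψ
      obtain ⟨χ, hχ⟩ := factor_surj g' hs'.2.1
        ((Submodule.mkQ (x • (⊤ : Submodule S N))).comp ψ) (by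
          intro y hy
          obtain ⟨z, rfl⟩ := hs'.exists_of_zero y hy
          exact hψ z)
      obtain ⟨χ1, hχ1⟩ := hV F K ι g ‹_› hs χ
      obtain ⟨χ2, hχ2⟩ := Module.projective_lifting_property
        (Submodule.mkQ (x • (⊤ : Submodule S N))) χ1 (Submodule.mkQ_surjective _)
      refine ⟨(χ2.comp ι).comp g', fun y => by simp [hs'.zero], fun y => ?_⟩
      have e1 := LinearMap.congr_fun hχ y
      have e2 := LinearMap.congr_fun hχ1 (g' y)
      have e3 := LinearMap.congr_fun hχ2 (ι (g' y))
      have e4 : Submodule.mkQ (x • (⊤ : Submodule S N)) (ψ y) =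
          Submodule.mkQ (x • (⊤ : Submodule S N)) (χ2 (ι (g' y))) :=
        (e1.symm.trans e2.symm).trans e3.symm
      exact (Submodule.Quotient.eq _).mp e4 |> (Submodule.Quotient.mk_eq_zero _).mpr
    | succ n =>
      intro F K ι g hF hs
      exact ih K (hE.syz hs) (hV F K ι g hF hs)

theorem extVan_of_regular (I : Ideal S) (E : ModuleCat.{u} S)
    (hE : ∀ x ∈ I, ∃ k : ℕ, ∀ z : E, x ^ k • z = 0) (n : ℕ) :
    ∀ (N : Type u) [AddCommGroup N] [Module S N] (rs : List S), (∀ r ∈ rs, r ∈ I) →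
      RingTheory.Sequence.IsWeaklyRegular N rs → n < rs.length → ExtVan N n E := by
  induction n with
  | zero =>
    intro N _ _ rs hI hr hl φ
    cases rs with
    | nil => simp at hl
    | cons x rs =>
      rw [RingTheory.Sequence.isWeaklyRegular_cons_iff] at hr
      obtain ⟨k, hk⟩ := hE x (hI x (by simp))
      ext z
      apply hr.1.pow k
      have : x ^ k • φ z = 0 := by rw [← map_smul, hk, map_zero]
      simpa using this
  | succ n ih =>
    intro N _ _ rs hI hr hl
    cases rs with
    | nil => simp at hl
    | cons x rs =>
      rw [RingTheory.Sequence.isWeaklyRegular_cons_iff] at hr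
      obtain ⟨k, hk⟩ := hE x (hI x (by simp))
      refine extVan_step x hr.1 k n E ⟨ModuleCat.of S PUnit, 0, 0,
        inferInstanceAs (Module.Projective S PUnit.{u + 1}), fun z => by simp [hk]⟩ ?_
      exact ih (QuotSMulTop x N) rs (fun r h => hI r (by simp [h])) hr.2 (by simpa using hl)

theorem IsMinSyz.isSyz [IsLocalRing S] (n : ℕ) : ∀ M K : ModuleCat.{u} S,
    IsMinSyz S n M K → IsSyz S n M K := by
  induction n with
  | zero => intro M K h; exact h
  | succ n ih =>
    rintro M K ⟨F, g, K', ι, h1, h2, h3, -, h5, h6, h7⟩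
    exact ⟨F, g, K', ι, h1, inferInstance, h3, h5, h6, ih _ _ h7⟩

theorem isSyz_stab (n : ℕ) : ∀ M M' K K' : ModuleCat.{u} S,
    IsSyz S n M K → IsSyz S n M' K' → Stab S M M' → Stab S K K' := by
  induction n with
  | zero =>
    rintro M M' K K' ⟨e⟩ ⟨e'⟩ h
    exact ((Stab.of_equiv e).trans h).trans (Stab.of_equiv e').symm
  | succ n ih =>
    rintro M M' K K' ⟨F, g, L, ι, h1, h2, h3, h5, h6, h7⟩
      ⟨F', g', L', ι', h1', h2', h3', h5', h6', h7'⟩ h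
    exact ih _ _ _ _ h7 h7' (schanuel ⟨h5, h3, h6⟩ ⟨h5', h3', h6'⟩ h)

theorem FactProj.isSyz {r : S} (n : ℕ) : ∀ M K : ModuleCat.{u} S,
    FactProj r M → IsSyz S n M K → FactProj r K := by
  induction n with
  | zero =>
    rintro M K ⟨F, a, b, hF, hab⟩ ⟨e⟩
    exact ⟨F, a.comp e.toLinearMap, e.symm.toLinearMap.comp b, hF, fun x => by simp [hab]⟩
  | succ n ih =>
    rintro M K hM ⟨F, g, L, ι, h1, h2, h3, h5, h6, h7⟩
    exact ih _ _ (hM.syz ⟨h5, h3, h6⟩) h7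

theorem isSyz_of_resolution (n : ℕ) : ∀ (M : ModuleCat.{u} S) (F : ℕ → ModuleCat.{u} S)
    (d : ∀ i : ℕ, (F (i+1) : Type u) →ₗ[S] F i) (e : (F 0 : Type u) →ₗ[S] M),
    (∀ i, Module.Finite S (F i)) → (∀ i, Module.Free S (F i)) →
    Function.Surjective e → LinearMap.range (d 0) = LinearMap.ker e →
    (∀ i, LinearMap.range (d (i+1)) = LinearMap.ker (d i)) →
    ∃ (K : ModuleCat.{u} S) (en : (F n : Type u) →ₗ[S] K), Function.Surjective en ∧
      LinearMap.range (d n) = LinearMap.ker en ∧ IsSyz S n M K := by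
  induction n with
  | zero =>
    intro M F d e h1 h2 h3 h4 h5
    exact ⟨M, e, h3, h4, ⟨LinearEquiv.refl S M⟩⟩
  | succ n ih =>
    intro M F d e h1 h2 h3 h4 h5
    obtain ⟨K, en, k1, k2, k3⟩ := ih (ModuleCat.of S (LinearMap.range (d 0)))
      (fun i => F (i + 1)) (fun i => d (i + 1)) (d 0).rangeRestrict
      (fun i => h1 _) (fun i => h2 _) (d 0).surjective_rangeRestrict
      (by rw [LinearMap.ker_rangeRestrict]; exact h5 0) (fun i => h5 _)
    have := h2 0
    exact ⟨K, en, k1, k2, F 0, e, ModuleCat.of S (LinearMap.range (d 0)),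
      (LinearMap.range (d 0)).subtype, h1 0, inferInstance, h3, Submodule.injective_subtype _,
      by rw [Submodule.range_subtype]; exact h4, k3⟩

theorem syz_ses (n : ℕ) : ∀ (E Z K En Kn : ModuleCat.{u} S) (α : E →ₗ[S] Z) (β : Z →ₗ[S] K),
    IsSES α β → IsSyz S n E En → IsSyz S n K Kn → ExtVan S n E →
    ∃ (Zn : ModuleCat.{u} S) (αn : En →ₗ[S] Zn) (βn : Zn →ₗ[S] Kn),
      IsSyz S n Z Zn ∧ IsSES αn βn ∧ ∀ φ : En →ₗ[S] S, ∃ ψ : Zn →ₗ[S] S, ψ.comp αn = φ := by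
  induction n with
  | zero =>
    rintro E Z K En Kn α β h ⟨eE⟩ ⟨eK⟩ hV
    refine ⟨Z, α.comp eE.toLinearMap, eK.symm.toLinearMap.comp β, ⟨LinearEquiv.refl S Z⟩,
      (h.equiv_comp eE).comp_equiv eK.symm, fun φ => ⟨0, ?_⟩⟩
    have h0 : φ.comp eE.symm.toLinearMap = 0 := hV _
    ext x
    have := LinearMap.congr_fun h0 (eE x)
    simpa using this.symm
  | succ n ih =>
    rintro E Z K En Kn α β h ⟨P, p, E', ιE, fP, pP, p1, p2, p3, hE⟩
      ⟨Q, q, K', ιK, fQ, pQ, q1, q2, q3, hK⟩ hV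
    have sE : IsSES ιE p := ⟨p2, p1, p3⟩
    have sK : IsSES ιK q := ⟨q2, q1, q3⟩
    obtain ⟨w, w1, w2, w3⟩ := horseshoe h p p1 q q1
    obtain ⟨α', β', s', a', b'⟩ := horseshoe_ker h sE sK w w2 w3
    have base : ∀ Zn : ModuleCat.{u} S, IsSyz S n (ModuleCat.of S (LinearMap.ker w)) Zn →
        IsSyz S (n + 1) Z Zn := fun Zn hZ =>
      ⟨ModuleCat.of S (P × Q), w, ModuleCat.of S (LinearMap.ker w), (LinearMap.ker w).subtype,
        inferInstanceAs (Module.Finite S (P × Q)), inferInstanceAs (Module.Projective S (P × Q)),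
        w1, Submodule.injective_subtype _, Submodule.range_subtype _, hZ⟩
    cases n with
    | zero =>
      obtain ⟨eE⟩ := hE
      obtain ⟨eK⟩ := hK
      refine ⟨ModuleCat.of S (LinearMap.ker w), α'.comp eE.toLinearMap,
        eK.symm.toLinearMap.comp β', base _ ⟨LinearEquiv.refl S _⟩,
        (s'.equiv_comp eE).comp_equiv eK.symm, fun φ => ?_⟩
      obtain ⟨ψ, hψ⟩ := hV P E' ιE p pP sE (φ.comp eE.symm.toLinearMap)
      refine ⟨(ψ.comp (LinearMap.fst S P Q)).comp (LinearMap.ker w).subtype, ?_⟩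
      ext x
      have := LinearMap.congr_fun hψ (eE x)
      change ψ (α' (eE x) : P × Q).1 = φ x
      rw [a']
      simpa using this
    | succ n =>
      obtain ⟨Zn, αn, βn, z1, z2⟩ := ih E' (ModuleCat.of S (LinearMap.ker w)) K' En Kn α' β' s'
        hE hK (hV P E' ιE p pP sE)
      exact ⟨Zn, αn, βn, base _ z1, z2⟩

/-- If multiplication by `r` on the cokernel of `d` factors through a projective module then
`r` kills the kernel-modulo-image for the dual complex. -/
theorem smul_mem_range_dual {F2 F1 F0 K : Type u} [AddCommGroup F2] [Module S F2]
    [AddCommGroup F1] [Module S F1] [AddCommGroup F0] [Module S F0] [AddCommGroup K] [Module S K]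
    [Module.Projective S F0] {r : S} (hr : FactProj r K) (d' : F2 →ₗ[S] F1) (d : F1 →ₗ[S] F0)
    (e : F0 →ₗ[S] K) (he : Function.Surjective e) (h : LinearMap.range d = LinearMap.ker e)
    (h' : LinearMap.range d' = LinearMap.ker d) (φ : Module.Dual S F1) (hφ : d'.dualMap φ = 0) :
    r • φ ∈ LinearMap.range d.dualMap := by
  obtain ⟨s, hs⟩ := hr.extend (ι := (LinearMap.range d).subtype) (g := e)
    ⟨Submodule.injective_subtype _, he, by rw [Submodule.range_subtype, h]⟩
  obtain ⟨φ', hφ'⟩ := factor_surj d.rangeRestrict d.surjective_rangeRestrict φ (by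
    intro x hx
    have : x ∈ LinearMap.range d' := by
      rw [h']
      exact congrArg Subtype.val hx
    obtain ⟨y, rfl⟩ := this
    exact LinearMap.congr_fun hφ y)
  refine ⟨φ'.comp s, ?_⟩
  ext x
  have h1 : s (d x) = r • d.rangeRestrict x := hs (d.rangeRestrict x)
  have h2 : φ' (d.rangeRestrict x) = φ x := LinearMap.congr_fun hφ' x
  change φ' (s (d x)) = r • φ x
  rw [h1, map_smul, h2]

/-- The sequence relating consecutive cokernels of a complex. -/
theorem subquot_ses {F G H : Type u} [AddCommGroup F] [Module S F] [AddCommGroup G] [Module S G]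
    [AddCommGroup H] [Module S H] (a : F →ₗ[S] G) (b : G →ₗ[S] H) (hab : b.comp a = 0) :
    ∃ (α : subquot (LinearMap.ker b) (LinearMap.range a) →ₗ[S] (G ⧸ LinearMap.range a))
      (β : (G ⧸ LinearMap.range a) →ₗ[S] LinearMap.range b), IsSES α β := by
  let α : ((LinearMap.ker b) ⧸ ((LinearMap.range a).comap (LinearMap.ker b).subtype)) →ₗ[S]
      (G ⧸ LinearMap.range a) := Submodule.mapQ _ _ (LinearMap.ker b).subtype le_rfl
  let β : (G ⧸ LinearMap.range a) →ₗ[S] LinearMap.range b :=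
    (LinearMap.range a).liftQ b.rangeRestrict (by
      rintro _ ⟨x, rfl⟩
      exact Subtype.ext (LinearMap.congr_fun hab x))
  refine ⟨α, β, IsSES.mk' (f := α) ?_ ?_ ?_ ?_⟩
  · rw [injective_iff_map_eq_zero]
    intro z hz
    obtain ⟨z, rfl⟩ := Submodule.mkQ_surjective _ z
    have h1 : (Submodule.Quotient.mk (z : G) : G ⧸ LinearMap.range a) = 0 := hz
    rw [Submodule.Quotient.mk_eq_zero] at h1
    exact (Submodule.Quotient.mk_eq_zero _).mpr h1
  · rintro ⟨_, x, rfl⟩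
    exact ⟨Submodule.Quotient.mk x, rfl⟩
  · intro z
    obtain ⟨z, rfl⟩ := Submodule.mkQ_surjective _ z
    exact Subtype.ext z.2
  · intro y hy
    obtain ⟨y, rfl⟩ := Submodule.mkQ_surjective _ y
    have : b y = 0 := congrArg Subtype.val hy
    exact ⟨Submodule.Quotient.mk ⟨y, this⟩, rfl⟩

theorem subquot_smul_eq_zero {G : Type u} [AddCommGroup G] [Module S G] (A B : Submodule S G)
    (r : S) (h : ∀ a ∈ A, r • a ∈ B) (z : subquot A B) : r • z = 0 := by
  obtain ⟨z', rfl⟩ := Submodule.mkQ_surjective (B.comap A.subtype) z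
  exact (Submodule.Quotient.mk_eq_zero (B.comap A.subtype)).mpr (h _ z'.2)

theorem subtype_mkQ_ses {G : Type u} [AddCommGroup G] [Module S G] (A : Submodule S G) :
    IsSES A.subtype A.mkQ :=
  ⟨Submodule.injective_subtype _, Submodule.mkQ_surjective _, by
    rw [Submodule.range_subtype, Submodule.ker_mkQ]⟩

end Helpers

/-- Proposition 2.3: over a local ring of positive depth, for a module `M` locally free
on the punctured spectrum and `0 ≤ i < depth R` there is an exact sequence
`0 → Tr Ω^{i+1} Tr Ω^{i+1} M → Tr Ω^i Tr Ω^i M ⊕ R^{n_i} → Tr Ω^i Ext^{i+1}(M,R) → 0`. -/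
theorem trOmega_exact_sequence [IsNoetherianRing R] [IsLocalRing R]
    (t : ℕ) (hdepth : depthE R (IsLocalRing.maximalIdeal R) R = (t : ℕ∞)) (htpos : 0 < t)
    (M : ModuleCat.{u} R) (hfg : Module.Finite R M)
    (hfree : ∀ p : PrimeSpectrum R, p.asIdeal ≠ IsLocalRing.maximalIdeal R →
      Module.Free (Localization.AtPrime p.asIdeal) (LocalizedModule p.asIdeal.primeCompl M))
    (i : ℕ) (hi : i < t)
    (A B C : ModuleCat.{u} R)
    (hA : ∃ Y : ModuleCat.{u} R, IsTrOmega R (i+1) M Y ∧ IsTrOmega R (i+1) Y A)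
    (hB : ∃ Y : ModuleCat.{u} R, IsTrOmega R i M Y ∧ IsTrOmega R i Y B)
    (hC : ∃ E : ModuleCat.{u} R, IsExtPos R i M E ∧ IsTrOmega R i E C) :
    ∃ (m : ℕ) (f : A →ₗ[R] (↥B × (Fin m → R))) (g : (↥B × (Fin m → R)) →ₗ[R] C),
      IsSES f g := by
  obtain ⟨Y1, ⟨K1, hK1, hT1⟩, ⟨KA, hKA, hTA⟩⟩ := hA
  obtain ⟨Y0, ⟨K0, hK0, hT0⟩, ⟨KB, hKB, hTB⟩⟩ := hB
  obtain ⟨E, ⟨F, d, e, fF, frF, he, hd0, hd, ⟨eE⟩⟩, ⟨KC, hKC, hTC⟩⟩ := hC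
  have prF : ∀ j, Module.Projective R (F j) := fun j => have := frF j; inferInstance
  -- the syzygies coming from the given resolution
  obtain ⟨L0, e0, l0, r0, s0⟩ := isSyz_of_resolution i M F d e fF frF he hd0 hd
  obtain ⟨L1, e1, l1, r1, s1⟩ := isSyz_of_resolution (i + 1) M F d e fF frF he hd0 hd
  -- the Ext module is killed by powers of elements of the maximal ideal
  have hkill : ∀ x ∈ IsLocalRing.maximalIdeal R, ∃ k : ℕ, ∀ z : E, x ^ k • z = 0 := by
    intro x hx
    obtain ⟨k, hk⟩ := exists_factProj_of_locally_free (M := M) hfree x hx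
    refine ⟨k, fun z => eE.injective ?_⟩
    rw [map_smul, map_zero]
    exact subquot_smul_eq_zero _ _ _ (fun φ hφ =>
      smul_mem_range_dual (hk.isSyz i M L0 s0) (d (i + 1)) (d i) e0 l0 r0 (hd i) φ hφ) _
  have hV : ExtVan R i E := by
    have h1 : (i : ℕ∞) < depthE R (IsLocalRing.maximalIdeal R) R := by
      rw [hdepth]; exact_mod_cast hi
    obtain ⟨_, ⟨rs, hI, hr, rfl⟩, hlt⟩ := lt_sSup_iff.mp h1
    exact extVan_of_regular _ E hkill i R rs hI hr (by exact_mod_cast hlt)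
  -- comparison of the transposes
  obtain ⟨G1, G0, dG, eG, _, _, _, _, g1, g2, -, -, ⟨uG⟩⟩ := hT1
  have stY1 : Stab R (TrMap (d (i + 1))) Y1 :=
    (trMap_stab (d (i + 1)) dG e1 eG l1 g1 r1 g2
      (isSyz_stab (i + 1) M M L1 K1 s1 (IsMinSyz.isSyz _ _ _ hK1)
        (Stab.of_equiv (LinearEquiv.refl R M)))).trans (Stab.of_equiv uG.symm)
  obtain ⟨H1, H0, dH, eH, _, _, _, _, g1', g2', -, -, ⟨uH⟩⟩ := hT0
  have stY0 : Stab R (TrMap (d i)) Y0 :=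
    (trMap_stab (d i) dH e0 eH l0 g1' r0 g2'
      (isSyz_stab i M M L0 K0 s0 (IsMinSyz.isSyz _ _ _ hK0)
        (Stab.of_equiv (LinearEquiv.refl R M)))).trans (Stab.of_equiv uH.symm)
  -- the fundamental sequence
  have hdd : (d (i + 1)).dualMap.comp (d i).dualMap = 0 := by
    ext φ x
    have : d i (d (i + 1) x) = 0 := by
      have : d (i + 1) x ∈ LinearMap.ker (d i) := hd i ▸ ⟨x, rfl⟩
      exact this
    change φ (d i (d (i + 1) x)) = 0
    rw [this, map_zero]
  obtain ⟨α0, β0, hs0⟩ := subquot_ses _ _ hdd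
  have hs1 := hs0.equiv_comp eE
  have hI := subtype_mkQ_ses (LinearMap.range (d (i + 1)).dualMap)
  obtain ⟨P, gP, N1, ιN, _, _, n1, -, n2, n3, hN⟩ := hKA
  have stN : Stab R (LinearMap.range (d (i + 1)).dualMap) N1 :=
    schanuel hI ⟨n2, n1, n3⟩ stY1
  obtain ⟨Z, α, β, hZ, stZ⟩ := ses_stab hs1 stN
  obtain ⟨Zi, αi, βi, z1, z2, z3⟩ := syz_ses i E Z N1 KC KA α β hZ
    (IsMinSyz.isSyz _ _ _ hKC) (IsMinSyz.isSyz _ _ _ hN) hV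
  obtain ⟨C1, C0, dC, eC, _, _, _, _, c1, c2, -, -, ⟨uC⟩⟩ := hTC
  obtain ⟨A1, A0, dA, eA, _, _, _, _, a1, a2, -, -, ⟨uA⟩⟩ := hTA
  obtain ⟨B1, B0, dB, eB, _, _, _, _, b1, b2, -, b4, ⟨uB⟩⟩ := hTB
  obtain ⟨dZ, w, w1, w2, f, g, hfg'⟩ := tr_ses z2 z3 dC eC dA eA c1 a1 c2 a2
  have stB : Stab R (TrMap dZ) (TrMap dB) :=
    trMap_stab dZ dB w eB w1 b1 w2 b2
      (isSyz_stab i Z Y0 Zi KB z1 (IsMinSyz.isSyz _ _ _ hKB) (stZ.trans stY0))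
  obtain ⟨P', Q', ⟨_, _⟩, ⟨_, _⟩, ⟨v⟩⟩ := stB
  obtain ⟨k, ⟨v'⟩⟩ := cancel_free v (trMap_functional dB b4)
  exact ⟨k, _, _, ((hfg'.mid_equiv (v'.trans (uB.symm.prodCongr
    (LinearEquiv.refl R (Fin k → R))))).equiv_comp uA).comp_equiv uC.symm⟩

end ResolvPaper
end

section
/- Let R be a commutative noetherian local ring with depth R = t > 0 and residue field k, and let L be a nonzero finitely generated R-module of finite length. Then res(Tr Ω^n L) = res(Tr Ω^n k) for every integer 0 ≤ n < t. -/
universe u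

open CategoryTheory

namespace ResolvPaper

variable (R : Type u) [CommRing R]

section Helpers

variable {R}

/-- Stable retracts: `A` is a retract of `B` modulo maps through a finite projective. -/
def StRet (A B : ModuleCat.{u} R) : Prop :=
  ∃ (u : A →ₗ[R] B) (v : B →ₗ[R] A) (P : ModuleCat.{u} R) (a : A →ₗ[R] P) (b : P →ₗ[R] A),
    Module.Finite R P ∧ Module.Projective R P ∧ ∀ x, v (u x) = x + b (a x)

lemma stRet_of_equiv (A B : ModuleCat.{u} R) (e : A ≃ₗ[R] B) : StRet A B :=
  ⟨e, e.symm, ModuleCat.of R PUnit.{u+1}, 0, 0, inferInstanceAs (Module.Finite R PUnit.{u+1}),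
    inferInstanceAs (Module.Projective R PUnit.{u+1}), by intro x; simp⟩

lemma stRet_of_subsingleton (A B : ModuleCat.{u} R) [Subsingleton A] : StRet A B :=
  ⟨0, 0, ModuleCat.of R PUnit.{u+1}, 0, 0, inferInstanceAs (Module.Finite R PUnit.{u+1}),
    inferInstanceAs (Module.Projective R PUnit.{u+1}), by intro x; exact Subsingleton.elim _ _⟩

lemma prod_mem {𝒳 : Set (ModuleCat.{u} R)} (h : IsResolving R 𝒳) (A B : ModuleCat.{u} R)
    (hA : A ∈ 𝒳) (hB : B ∈ 𝒳) : ModuleCat.of R (A × B) ∈ 𝒳 :=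
  h.ext_closed A (ModuleCat.of R (A × B)) B (LinearMap.inl R A B) (LinearMap.snd R A B)
    ⟨LinearMap.inl_injective, LinearMap.snd_surjective, LinearMap.range_inl R A B⟩ hA hB

lemma retract_mem {𝒳 : Set (ModuleCat.{u} R)} (h : IsResolving R 𝒳) (A B : ModuleCat.{u} R)
    (i : A →ₗ[R] B) (r : B →ₗ[R] A) (hri : ∀ x, r (i x) = x) (hB : B ∈ 𝒳) : A ∈ 𝒳 := by
  refine h.summand_closed A (ModuleCat.of R (LinearMap.ker r)) ?_
  refine h.iso_closed B _ ⟨?_⟩ hB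
  refine LinearEquiv.ofLinearMap
    (LinearMap.prod r (LinearMap.codRestrict (LinearMap.ker r) (LinearMap.id - i ∘ₗ r) ?_))
    (LinearMap.coprod i (LinearMap.ker r).subtype) ?_ ?_
  · intro x; simp [hri]
  · apply LinearMap.ext
    rintro ⟨a, k, hk⟩
    have hk' : r k = 0 := hk
    refine Prod.ext ?_ (Subtype.ext ?_)
    · simp [hri, hk']
    · simp [hri, hk']
  · apply LinearMap.ext
    intro x; simp

lemma stRet_mem {𝒳 : Set (ModuleCat.{u} R)} (h : IsResolving R 𝒳) {A B : ModuleCat.{u} R}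
    (hs : StRet A B) (hB : B ∈ 𝒳) : A ∈ 𝒳 := by
  obtain ⟨u, v, P, a, b, hf, hp, huv⟩ := hs
  refine retract_mem h A (ModuleCat.of R (B × P)) (LinearMap.prod u a)
    (LinearMap.coprod v (-b)) ?_ (prod_mem h _ _ hB (h.proj_mem P hf hp))
  intro x; simp [huv]

section lifts
variable {A B C Q : Type u} [AddCommGroup A] [Module R A] [AddCommGroup B] [Module R B]
  [AddCommGroup C] [Module R C] [AddCommGroup Q] [Module R Q]

lemma lift_inj (f : A →ₗ[R] B) (hf : Function.Injective f) (h : Q →ₗ[R] B)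
    (hh : ∀ q, h q ∈ LinearMap.range f) : ∃ h' : Q →ₗ[R] A, ∀ q, f (h' q) = h q := by
  refine ⟨(LinearEquiv.ofInjective f hf).symm.toLinearMap ∘ₗ
    LinearMap.codRestrict (LinearMap.range f) h hh, fun q => ?_⟩
  have := (LinearEquiv.ofInjective f hf).apply_symm_apply
    (LinearMap.codRestrict (LinearMap.range f) h hh q)
  exact congrArg Subtype.val this

lemma lift_range [Module.Projective R Q] (f : A →ₗ[R] B) (h : Q →ₗ[R] B)
    (hh : ∀ q, h q ∈ LinearMap.range f) : ∃ h' : Q →ₗ[R] A, ∀ q, f (h' q) = h q := by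
  obtain ⟨h', e⟩ := Module.projective_lifting_property f.rangeRestrict
    (LinearMap.codRestrict (LinearMap.range f) h hh) f.surjective_rangeRestrict
  exact ⟨h', fun q => congrArg Subtype.val (LinearMap.congr_fun e q)⟩

lemma lift_surj (p : A →ₗ[R] B) (hp : Function.Surjective p) (h : A →ₗ[R] C)
    (hh : ∀ a, p a = 0 → h a = 0) : ∃ h' : B →ₗ[R] C, ∀ a, h' (p a) = h a := by
  have hk : LinearMap.ker p ≤ LinearMap.ker h := fun a ha => hh a ha
  refine ⟨(LinearMap.ker p).liftQ h hk ∘ₗ (p.quotKerEquivOfSurjective hp).symm.toLinearMap,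
    fun a => ?_⟩
  have : (p.quotKerEquivOfSurjective hp).symm (p a) = Submodule.Quotient.mk a := by
    rw [LinearEquiv.symm_apply_eq]; rfl
  simp [this]

lemma mem_range_of_ses {f : A →ₗ[R] B} {g : B →ₗ[R] C} (h : LinearMap.range f = LinearMap.ker g)
    {x : B} (hx : g x = 0) : ∃ a, f a = x := by
  have : x ∈ LinearMap.range f := by rw [h]; exact hx
  exact this

lemma comp_zero_of_ses {f : A →ₗ[R] B} {g : B →ₗ[R] C} (h : LinearMap.range f = LinearMap.ker g)
    (a : A) : g (f a) = 0 := by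
  have : f a ∈ LinearMap.ker g := by rw [← h]; exact ⟨a, rfl⟩
  exact this

lemma range_eq_ker_of {f : A →ₗ[R] B} {g : B →ₗ[R] C} (h1 : ∀ a, g (f a) = 0)
    (h2 : ∀ x, g x = 0 → ∃ a, f a = x) : LinearMap.range f = LinearMap.ker g := by
  ext x
  constructor
  · rintro ⟨a, rfl⟩; exact h1 a
  · intro hx; exact h2 x hx

end lifts

lemma stRet_syz {K P M K2 P2 M2 : ModuleCat.{u} R} (f : K →ₗ[R] P) (g : P →ₗ[R] M)
    (f2 : K2 →ₗ[R] P2) (g2 : P2 →ₗ[R] M2) (h : IsSES f g) (h2 : IsSES f2 g2)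
    [Module.Finite R P] [Module.Projective R P] [Module.Projective R P2]
    (hs : StRet M M2) : StRet K K2 := by
  obtain ⟨u, v, Q, a, b, hQf, hQp, huv⟩ := hs
  obtain ⟨hf, hg, hfg⟩ := h
  obtain ⟨hf2, hg2, hfg2⟩ := h2
  obtain ⟨u0, hu0⟩ := Module.projective_lifting_property g2 (u ∘ₗ g) hg2
  obtain ⟨v0, hv0⟩ := Module.projective_lifting_property g (v ∘ₗ g2) hg
  obtain ⟨b0, hb0⟩ := Module.projective_lifting_property g b hg
  replace hu0 : ∀ x, g2 (u0 x) = u (g x) := LinearMap.congr_fun hu0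
  replace hv0 : ∀ x, g (v0 x) = v (g2 x) := LinearMap.congr_fun hv0
  replace hb0 : ∀ x, g (b0 x) = b x := LinearMap.congr_fun hb0
  obtain ⟨u', hu'⟩ := lift_inj f2 hf2 (u0 ∘ₗ f) (by
    intro q; rw [hfg2]; simp [hu0, comp_zero_of_ses hfg])
  obtain ⟨v', hv'⟩ := lift_inj f hf (v0 ∘ₗ f2) (by
    intro q; rw [hfg]; simp [hv0, comp_zero_of_ses hfg2])
  obtain ⟨k, hk⟩ := lift_inj f hf (v0 ∘ₗ u0 - LinearMap.id - b0 ∘ₗ a ∘ₗ g) (by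
    intro q; rw [hfg]; simp [hv0, hu0, huv, hb0])
  refine ⟨u', v', P, f, k, inferInstance, inferInstance, fun x => hf ?_⟩
  simp [hv', hu', hk, comp_zero_of_ses hfg]

/-- `T` is a transpose of `K`, from a not necessarily minimal presentation. -/
def IsTr (K T : ModuleCat.{u} R) : Prop :=
  ∃ (F1 F0 : ModuleCat.{u} R) (d : F1 →ₗ[R] F0) (e : F0 →ₗ[R] K)
    (ρ : Module.Dual R F1 →ₗ[R] T),
    Module.Finite R F0 ∧ Module.Free R F0 ∧ Module.Finite R F1 ∧ Module.Free R F1 ∧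
    Function.Surjective e ∧ LinearMap.range d = LinearMap.ker e ∧
    Function.Surjective ρ ∧ LinearMap.range d.dualMap = LinearMap.ker ρ

lemma IsTranspose.isTr [IsLocalRing R] {K T : ModuleCat.{u} R} (h : IsTranspose R K T) :
    IsTr K T := by
  obtain ⟨F1, F0, d, e, h1, h2, h3, h4, h5, h6, -, -, ⟨E⟩⟩ := h
  refine ⟨F1, F0, d, e, E.symm.toLinearMap ∘ₗ (LinearMap.range d.dualMap).mkQ,
    h1, h2, h3, h4, h5, h6, ?_, ?_⟩
  · exact E.symm.surjective.comp (Submodule.mkQ_surjective _)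
  · ext x; simp

lemma IsTr.finite {K T : ModuleCat.{u} R} (h : IsTr K T) : Module.Finite R T := by
  obtain ⟨F1, F0, d, e, ρ, h1, h2, h3, h4, h5, h6, h7, h8⟩ := h
  exact Module.Finite.of_surjective ρ h7

lemma stRet_tr {K T K2 T2 : ModuleCat.{u} R} (h : IsTr K T) (h2 : IsTr K2 T2)
    (hs : StRet K K2) : StRet T T2 := by
  obtain ⟨u, v, Q, a, b, hQf, hQp, huv⟩ := hs
  obtain ⟨F1, F0, d, e, ρ, _, _, _, _, he, hde, hρ, hdρ⟩ := h
  obtain ⟨G1, G0, d2, e2, ρ2, _, _, _, _, he2, hde2, hρ2, hdρ2⟩ := h2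
  obtain ⟨u0, hu0⟩ := Module.projective_lifting_property e2 (u ∘ₗ e) he2
  obtain ⟨v0, hv0⟩ := Module.projective_lifting_property e (v ∘ₗ e2) he
  obtain ⟨b0, hb0⟩ := Module.projective_lifting_property e b he
  replace hu0 : ∀ x, e2 (u0 x) = u (e x) := LinearMap.congr_fun hu0
  replace hv0 : ∀ x, e (v0 x) = v (e2 x) := LinearMap.congr_fun hv0
  replace hb0 : ∀ x, e (b0 x) = b x := LinearMap.congr_fun hb0
  obtain ⟨u1, hu1⟩ := lift_range d2 (u0 ∘ₗ d) (by
    intro q; rw [hde2]; simp [hu0, comp_zero_of_ses hde])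
  obtain ⟨v1, hv1⟩ := lift_range d (v0 ∘ₗ d2) (by
    intro q; rw [hde]; simp [hv0, comp_zero_of_ses hde2])
  obtain ⟨k, hk⟩ := lift_range d (v0 ∘ₗ u0 - LinearMap.id - b0 ∘ₗ a ∘ₗ e) (by
    intro q; rw [hde]; simp [hv0, hu0, huv, hb0])
  let κ : F1 →ₗ[R] F1 := v1 ∘ₗ u1 - LinearMap.id - k ∘ₗ d
  have hκ : ∀ x, d (κ x) = 0 := by
    intro x
    simp [κ, hv1, hu1, hk, comp_zero_of_ses hde]
  obtain ⟨tv, htv⟩ := lift_surj ρ hρ (ρ2 ∘ₗ v1.dualMap) (by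
    intro φ hφ
    obtain ⟨ψ, rfl⟩ := mem_range_of_ses hdρ hφ
    have : v1.dualMap (d.dualMap ψ) = d2.dualMap (v0.dualMap ψ) := by
      ext x; simp [hv1]
    simp only [LinearMap.comp_apply, this]
    exact comp_zero_of_ses hdρ2 _)
  obtain ⟨tu, htu⟩ := lift_surj ρ2 hρ2 (ρ ∘ₗ u1.dualMap) (by
    intro φ hφ
    obtain ⟨ψ, rfl⟩ := mem_range_of_ses hdρ2 hφ
    have : u1.dualMap (d2.dualMap ψ) = d.dualMap (u0.dualMap ψ) := by
      ext x; simp [hu1]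
    simp only [LinearMap.comp_apply, this]
    exact comp_zero_of_ses hdρ _)
  obtain ⟨ta, hta⟩ := lift_surj ρ hρ (κ.dualMap) (by
    intro φ hφ
    obtain ⟨ψ, rfl⟩ := mem_range_of_ses hdρ hφ
    ext x; simp [hκ])
  refine ⟨tv, tu, ModuleCat.of R (Module.Dual R F1), ta, ρ,
    inferInstanceAs (Module.Finite R (Module.Dual R F1)),
    inferInstanceAs (Module.Projective R (Module.Dual R F1)), fun x => ?_⟩
  obtain ⟨φ, rfl⟩ := hρ x
  rw [htv, hta, LinearMap.comp_apply, htu, LinearMap.comp_apply]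
  have : u1.dualMap (v1.dualMap φ) = φ + κ.dualMap φ + d.dualMap (k.dualMap φ) := by
    ext x; simp [κ]; ring
  rw [this, map_add, map_add, comp_zero_of_ses hdρ, add_zero]

/-- `T` is a transpose of an `n`-th syzygy of `L`. -/
def IsD : ℕ → ModuleCat.{u} R → ModuleCat.{u} R → Prop
  | 0, L, T => IsTr L T
  | n+1, L, T => ∃ (K P : ModuleCat.{u} R) (f : K →ₗ[R] P) (g : P →ₗ[R] L),
      Module.Finite R P ∧ Module.Free R P ∧ IsSES f g ∧ IsD n K T

lemma stRet_isD {n : ℕ} {L T L2 T2 : ModuleCat.{u} R} (h : IsD n L T) (h2 : IsD n L2 T2)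
    (hs : StRet L L2) : StRet T T2 := by
  induction n generalizing L L2 with
  | zero => exact stRet_tr h h2 hs
  | succ n ih =>
    obtain ⟨K, P, f, g, _, _, hfg, hK⟩ := h
    obtain ⟨K2, P2, f2, g2, _, _, hfg2, hK2⟩ := h2
    exact ih hK hK2 (stRet_syz f g f2 g2 hfg hfg2 hs)

lemma IsD.finite {n : ℕ} {L T : ModuleCat.{u} R} (h : IsD n L T) : Module.Finite R T := by
  induction n generalizing L with
  | zero => exact IsTr.finite h
  | succ n ih =>
    obtain ⟨K, P, f, g, _, _, hfg, hK⟩ := h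
    exact ih hK

lemma isTr_congr {K K2 T : ModuleCat.{u} R} (E : K ≃ₗ[R] K2) (h : IsTr K T) : IsTr K2 T := by
  obtain ⟨F1, F0, d, e, ρ, h1, h2, h3, h4, h5, h6, h7, h8⟩ := h
  refine ⟨F1, F0, d, E.toLinearMap ∘ₗ e, ρ, h1, h2, h3, h4, E.surjective.comp h5, ?_, h7, h8⟩
  rw [h6]; ext x; simp

lemma isD_of_isTrOmega [IsLocalRing R] {n : ℕ} {L T : ModuleCat.{u} R} (h : IsTrOmega R n L T) :
    IsD n L T := by
  obtain ⟨K, hK, hT⟩ := h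
  have hT := hT.isTr
  induction n generalizing L with
  | zero => exact isTr_congr (Classical.choice hK) hT
  | succ n ih =>
    obtain ⟨F, g, K', i, h1, h2, h3, -, h5, h6, h7⟩ := hK
    exact ⟨K', F, i, g, h1, h2, ⟨h5, h3, h6⟩, ih h7⟩

/-- `D_n(L)` lies in `𝒳`. -/
def Good (𝒳 : Set (ModuleCat.{u} R)) (n : ℕ) (L : ModuleCat.{u} R) : Prop :=
  ∃ T, IsD n L T ∧ T ∈ 𝒳

lemma Good.mem {𝒳 : Set (ModuleCat.{u} R)} (hX : IsResolving R 𝒳) {n : ℕ}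
    {L L2 T : ModuleCat.{u} R} (h : Good 𝒳 n L) (hs : StRet L2 L) (hT : IsD n L2 T) : T ∈ 𝒳 := by
  obtain ⟨T', hT', hm⟩ := h
  exact stRet_mem hX (stRet_isD hT hT' hs) hm


lemma horseshoe_s17 {L' L L'' K' P' K'' P'' : ModuleCat.{u} R} (i : L' →ₗ[R] L) (π : L →ₗ[R] L'')
    (hs : IsSES i π) (f' : K' →ₗ[R] P') (e' : P' →ₗ[R] L') (h' : IsSES f' e')
    (f'' : K'' →ₗ[R] P'') (e'' : P'' →ₗ[R] L'') (h'' : IsSES f'' e'')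
    [Module.Projective R P''] :
    ∃ (K : ModuleCat.{u} R) (f : K →ₗ[R] (ModuleCat.of R (P' × P'')))
      (e : (ModuleCat.of R (P' × P'')) →ₗ[R] L) (j : K' →ₗ[R] K) (q : K →ₗ[R] K''),
      IsSES f e ∧ IsSES j q ∧ (∀ p, e (p, 0) = i (e' p)) ∧ (∀ x, π (e x) = e'' x.2) ∧
      (∀ k, f (j k) = (f' k, 0)) ∧ ∀ x, (f x).2 = f'' (q x) := by
  obtain ⟨hi, hπ, hiπ⟩ := hs
  obtain ⟨hf', he', hfe'⟩ := h'
  obtain ⟨hf'', he'', hfe''⟩ := h''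
  obtain ⟨s, hs⟩ := Module.projective_lifting_property π e'' hπ
  replace hs : ∀ x, π (s x) = e'' x := LinearMap.congr_fun hs
  let e : (P' × P'') →ₗ[R] L := LinearMap.coprod (i ∘ₗ e') s
  have hπe : ∀ x, π (e x) = e'' x.2 := by
    intro x; simp [e, comp_zero_of_ses hiπ, hs]
  have he0 : ∀ p, e (p, 0) = i (e' p) := by intro p; simp [e]
  obtain ⟨q, hq⟩ := lift_inj f'' hf''
    (LinearMap.snd R P' P'' ∘ₗ (LinearMap.ker e).subtype) (by
      rintro ⟨x, hx⟩
      have hx : e x = 0 := hx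
      rw [hfe'']
      simp only [LinearMap.comp_apply, Submodule.subtype_apply, LinearMap.mem_ker,
        LinearMap.snd_apply]
      rw [← hπe, hx, map_zero])
  let j : K' →ₗ[R] LinearMap.ker e :=
    LinearMap.codRestrict _ (LinearMap.inl R P' P'' ∘ₗ f') (by
      intro k; simp [e, comp_zero_of_ses hfe'])
  have hj : ∀ k, (j k : P' × P'') = (f' k, 0) := fun k => rfl
  refine ⟨ModuleCat.of R (LinearMap.ker e), (LinearMap.ker e).subtype, e, j, q,
    ⟨Subtype.val_injective, ?_, ?_⟩, ⟨?_, ?_, range_eq_ker_of ?_ ?_⟩, he0, hπe, hj,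
    fun x => (hq x).symm⟩
  · intro l
    obtain ⟨p'', hp''⟩ := he'' (π l)
    obtain ⟨l', hl'⟩ := mem_range_of_ses hiπ (x := l - s p'') (by simp [hs, hp''])
    obtain ⟨p', rfl⟩ := he' l'
    exact ⟨(p', p''), by simp [e, hl']⟩
  · exact Submodule.range_subtype _
  · intro a b hab
    apply hf'
    have := congrArg (fun z : LinearMap.ker e => (z : P' × P'').1) hab
    exact this
  · intro k
    obtain ⟨l', hl'⟩ := mem_range_of_ses hiπ (x := s (f'' k)) (by
      simp [hs, comp_zero_of_ses hfe''])
    obtain ⟨p', rfl⟩ := he' l'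
    refine ⟨⟨(-p', f'' k), ?_⟩, hf'' ?_⟩
    · simp [e, hl']
    · exact hq _
  · intro k
    apply hf''
    rw [hq, map_zero]
    rfl
  · intro x hx
    have h2 : (x : P' × P'').2 = 0 := by
      have := hq x
      rw [hx, map_zero] at this
      exact this.symm
    have h1 : e (x : P' × P'') = 0 := x.2
    have hx' : (x : P' × P'') = ((x : P' × P'').1, 0) := Prod.ext rfl h2
    rw [hx', he0] at h1
    obtain ⟨k, hk⟩ := mem_range_of_ses hfe' (x := (x : P' × P'').1)
      (hi (by rw [h1, map_zero]))
    refine ⟨k, Subtype.ext ?_⟩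
    rw [hj, hk, ← hx']

lemma exists_cover [IsNoetherianRing R] (M : ModuleCat.{u} R) [Module.Finite R M] :
    ∃ (K P : ModuleCat.{u} R) (f : K →ₗ[R] P) (g : P →ₗ[R] M),
      Module.Finite R K ∧ Module.Finite R P ∧ Module.Free R P ∧ IsSES f g := by
  obtain ⟨m, g, hg⟩ := Module.Finite.exists_fin' R M
  exact ⟨ModuleCat.of R (LinearMap.ker g), ModuleCat.of R (Fin m → R),
    (LinearMap.ker g).subtype, g, inferInstanceAs (Module.Finite R (LinearMap.ker g)),
    inferInstanceAs (Module.Finite R (Fin m → R)), inferInstanceAs (Module.Free R (Fin m → R)),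
    Subtype.val_injective, hg, Submodule.range_subtype _⟩

lemma isTr_mk {K F1 F0 : ModuleCat.{u} R} (d : F1 →ₗ[R] F0) (e : F0 →ₗ[R] K)
    [Module.Finite R F0] [Module.Free R F0] [Module.Finite R F1] [Module.Free R F1]
    (he : Function.Surjective e) (hde : LinearMap.range d = LinearMap.ker e) :
    IsTr K (ModuleCat.of R (Module.Dual R F1 ⧸ LinearMap.range d.dualMap)) :=
  ⟨F1, F0, d, e, (LinearMap.range d.dualMap).mkQ, inferInstance, inferInstance, inferInstance,
    inferInstance, he, hde, Submodule.mkQ_surjective _, (Submodule.ker_mkQ _).symm⟩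

lemma exact_comp {K N F1 F0 M : ModuleCat.{u} R} {a : M →ₗ[R] F1} {f1 : F1 →ₗ[R] N}
    {f : N →ₗ[R] F0} {e : F0 →ₗ[R] K}
    (h1 : IsSES a f1) (h : IsSES f e) : LinearMap.range (f ∘ₗ f1) = LinearMap.ker e := by
  rw [LinearMap.range_comp_of_range_eq_top _ (LinearMap.range_eq_top.2 h1.2.1), h.2.2]

lemma exists_isTr [IsNoetherianRing R] (M : ModuleCat.{u} R) [Module.Finite R M] :
    ∃ T, IsTr M T := by
  obtain ⟨K, P, f, g, _, _, _, h⟩ := exists_cover M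
  obtain ⟨K1, P1, f1, g1, _, _, _, h1⟩ := exists_cover K
  exact ⟨_, isTr_mk (f ∘ₗ g1) g h.2.1 (exact_comp h1 h)⟩

lemma exists_isD [IsNoetherianRing R] (n : ℕ) (M : ModuleCat.{u} R) [Module.Finite R M] :
    ∃ T, IsD n M T := by
  induction n generalizing M with
  | zero => exact exists_isTr M
  | succ n ih =>
    obtain ⟨K, P, f, g, _, h2, h3, h⟩ := exists_cover M
    obtain ⟨T, hT⟩ := ih K
    exact ⟨T, K, P, f, g, h2, h3, h, hT⟩

lemma tr_ses_s17 [IsNoetherianRing R] {K' K K'' : ModuleCat.{u} R} (i : K' →ₗ[R] K)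
    (π : K →ₗ[R] K'') (hs : IsSES i π) [Module.Finite R K'] [Module.Finite R K'']
    (hext : ∀ φ : K' →ₗ[R] R, ∃ ψ : K →ₗ[R] R, ∀ x, ψ (i x) = φ x) :
    ∃ (T'' T T' : ModuleCat.{u} R) (p : T'' →ₗ[R] T) (q : T →ₗ[R] T'),
      IsTr K'' T'' ∧ IsTr K T ∧ IsTr K' T' ∧ IsSES p q := by
  obtain ⟨N', P0', f', e', _, _, _, h'⟩ := exists_cover K'
  obtain ⟨N'', P0'', f'', e'', _, _, _, h''⟩ := exists_cover K''
  obtain ⟨N, f, e, j, r, hfe, hjr, he0, hπe, hfj, hfr⟩ := horseshoe_s17 i π hs f' e' h' f'' e'' h''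
  obtain ⟨M', P1', a', g', _, _, _, hh'⟩ := exists_cover N'
  obtain ⟨M'', P1'', a'', g'', _, _, _, hh''⟩ := exists_cover N''
  obtain ⟨M, a, g, b, c, hag, hbc, hg0, hrg, -, -⟩ := horseshoe_s17 j r hjr a' g' hh' a'' g'' hh''
  have : Module.Finite R (ModuleCat.of R (P0' × P0'')) :=
    inferInstanceAs (Module.Finite R (P0' × P0''))
  have : Module.Free R (ModuleCat.of R (P0' × P0'')) :=
    inferInstanceAs (Module.Free R (P0' × P0''))
  have : Module.Finite R (ModuleCat.of R (P1' × P1'')) :=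
    inferInstanceAs (Module.Finite R (P1' × P1''))
  have : Module.Free R (ModuleCat.of R (P1' × P1'')) :=
    inferInstanceAs (Module.Free R (P1' × P1''))
  have ht' := isTr_mk (f' ∘ₗ g') e' h'.2.1 (exact_comp hh' h')
  have ht'' := isTr_mk (f'' ∘ₗ g'') e'' h''.2.1 (exact_comp hh'' h'')
  have ht := isTr_mk (f ∘ₗ g) e hfe.2.1 (exact_comp hag hfe)
  let d : (P1' × P1'') →ₗ[R] (P0' × P0'') := f ∘ₗ g
  have hd1 : ∀ p, d (p, 0) = (f' (g' p), 0) := by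
    intro p
    change f (g (p, 0)) = _
    rw [hg0, hfj]
  have hd2 : ∀ x, (d x).2 = f'' (g'' x.2) := by
    intro x
    change (f (g x)).2 = _
    rw [hfr, hrg]
  refine ⟨_, _, _, Submodule.mapQ _ _ (LinearMap.snd R P1' P1'').dualMap ?_,
    Submodule.mapQ _ _ (LinearMap.inl R P1' P1'').dualMap ?_, ht'', ht, ht', ?_, ?_,
    range_eq_ker_of ?_ ?_⟩
  · rintro _ ⟨ψ, rfl⟩
    refine ⟨ψ ∘ₗ LinearMap.snd R P0' P0'', ?_⟩
    apply LinearMap.ext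
    intro x
    exact congrArg ψ (hd2 x)
  · rintro _ ⟨ψ, rfl⟩
    refine ⟨ψ ∘ₗ LinearMap.inl R P0' P0'', ?_⟩
    apply LinearMap.ext
    intro x
    exact (congrArg ψ (hd1 x)).symm
  · rw [injective_iff_map_eq_zero]
    intro y hy
    obtain ⟨φ, rfl⟩ := Submodule.mkQ_surjective _ y
    have hy' : φ ∘ₗ LinearMap.snd R P1' P1'' ∈ LinearMap.range (LinearMap.dualMap d) :=
      (Submodule.Quotient.mk_eq_zero _).1 hy
    obtain ⟨γ, hγ⟩ := hy'
    replace hγ : ∀ x, γ (d x) = φ x.2 := fun x => LinearMap.congr_fun hγ x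
    obtain ⟨θ, hθ⟩ := lift_surj e' h'.2.1 (γ ∘ₗ LinearMap.inl R P0' P0'') (by
      intro p hp
      obtain ⟨n, rfl⟩ := mem_range_of_ses h'.2.2 hp
      obtain ⟨m, rfl⟩ := hh'.2.1 n
      have := hγ (m, 0)
      rw [hd1] at this
      simpa using this)
    obtain ⟨ψ, hψ⟩ := hext θ
    apply (Submodule.Quotient.mk_eq_zero _).2
    refine ⟨(γ - ψ ∘ₗ e) ∘ₗ LinearMap.inr R P0' P0'', ?_⟩
    apply LinearMap.ext
    intro x
    change γ (0, f'' (g'' x)) - ψ (e (0, f'' (g'' x))) = φ x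
    have h1 : ∀ p, γ (p, 0) = ψ (e (p, 0)) := by
      intro p
      rw [he0, hψ, hθ]; rfl
    have h2 : e (d (0, x)) = 0 := comp_zero_of_ses hfe.2.2 _
    have h3 : d (0, x) = ((d (0, x)).1, 0) + (0, f'' (g'' x)) := by
      refine Prod.ext ?_ ?_
      · simp
      · simp [hd2]
    have h4 := hγ (0, x)
    rw [h3, map_add] at h4 h2
    have h5 : γ (0, f'' (g'' x)) = φ x - γ ((d (0, x)).1, 0) := by
      rw [← h4]; simp
    have h6 : e (0, f'' (g'' x)) = - e ((d (0, x)).1, 0) := by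
      rw [eq_neg_iff_add_eq_zero, add_comm]; exact h2
    rw [h5, h6, h1, map_neg]; ring
  · intro y
    obtain ⟨φ, rfl⟩ := Submodule.mkQ_surjective _ y
    refine ⟨Submodule.mkQ _ (φ ∘ₗ LinearMap.fst R P1' P1''), ?_⟩
    apply congrArg (Submodule.mkQ _)
    apply LinearMap.ext
    intro x
    rfl
  · intro y
    obtain ⟨φ, rfl⟩ := Submodule.mkQ_surjective _ y
    have : (LinearMap.inl R P1' P1'').dualMap ((LinearMap.snd R P1' P1'').dualMap φ) = 0 := by
      apply LinearMap.ext
      intro x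
      exact map_zero φ
    change Submodule.mkQ _ ((LinearMap.inl R P1' P1'').dualMap
      ((LinearMap.snd R P1' P1'').dualMap φ)) = 0
    rw [this, map_zero]
  · intro y hy
    obtain ⟨φ, rfl⟩ := Submodule.mkQ_surjective _ y
    obtain ⟨γ, hγ⟩ := (Submodule.Quotient.mk_eq_zero _).1 hy
    replace hγ : ∀ x, γ (f' (g' x)) = φ (x, 0) := fun x => LinearMap.congr_fun hγ x
    let μ : (P1' × P1'') →ₗ[R] R := φ - (γ ∘ₗ LinearMap.fst R P0' P0'') ∘ₗ d
    refine ⟨Submodule.mkQ _ (μ ∘ₗ LinearMap.inr R P1' P1''), ?_⟩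
    refine (Submodule.Quotient.eq _).2 ⟨-(γ ∘ₗ LinearMap.fst R P0' P0''), ?_⟩
    apply LinearMap.ext
    rintro ⟨x, y⟩
    change -(γ (d (x, y)).1) = μ (0, y) - φ (x, y)
    have h1 : μ (0, y) = φ (0, y) - γ (d (0, y)).1 := rfl
    have h2 : ((x, y) : P1' × P1'') = (x, 0) + (0, y) := by simp
    rw [h1, h2, map_add, map_add, hd1, Prod.fst_add, map_add, hγ]
    ring

open CategoryTheory.Abelian in
/-- The vanishing of `Ext^n(L, R)`. -/
def EV (n : ℕ) (L : ModuleCat.{u} R) : Prop :=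
  Subsingleton (Ext.{u} L (ModuleCat.of R R) n)

lemma IsSES.shortExact {K P N : ModuleCat.{u} R} {f : K →ₗ[R] P} {g : P →ₗ[R] N}
    (h : IsSES f g) : ∃ w, (ShortComplex.mk (ModuleCat.ofHom f) (ModuleCat.ofHom g) w).ShortExact := by
  have hex : Function.Exact f g := (LinearMap.exact_iff).2 h.2.2.symm
  refine ⟨by ext x; exact comp_zero_of_ses h.2.2 x, ?_⟩
  refine { exact := ?_, mono_f := ?_, epi_g := ?_ }
  · rw [ShortComplex.ShortExact.moduleCat_exact_iff_function_exact]
    exact hex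
  · exact (ModuleCat.mono_iff_injective _).2 h.1
  · exact (ModuleCat.epi_iff_surjective _).2 h.2.1

open CategoryTheory.Abelian in
lemma EV.zero {L : ModuleCat.{u} R} (h : EV 0 L) (φ : L →ₗ[R] R) : φ = 0 := by
  have : Subsingleton (Ext.{u} L (ModuleCat.of R R) 0) := h
  have h1 : Subsingleton (L ⟶ ModuleCat.of R R) := Ext.addEquiv₀.symm.subsingleton
  have h2 : ModuleCat.ofHom φ = (0 : L ⟶ ModuleCat.of R R) := Subsingleton.elim _ _
  exact congrArg ModuleCat.Hom.hom h2

open CategoryTheory.Abelian in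
lemma EV.extend {K P N : ModuleCat.{u} R} {f : K →ₗ[R] P} {g : P →ₗ[R] N}
    (h : IsSES f g) (hN : EV 1 N) (φ : K →ₗ[R] R) : ∃ ψ : P →ₗ[R] R, ∀ x, ψ (f x) = φ x := by
  obtain ⟨w, hS⟩ := h.shortExact
  have : Subsingleton (Ext.{u} N (ModuleCat.of R R) 1) := hN
  obtain ⟨y, hy⟩ := Ext.contravariant_sequence_exact₁ hS (ModuleCat.of R R)
    (Ext.mk₀ (ModuleCat.ofHom φ)) (n₁ := 1) rfl (this.elim _ _)
  obtain ⟨y', rfl⟩ := (Ext.mk₀_bijective _ _).2 y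
  rw [Ext.mk₀_comp_mk₀] at hy
  have := (Ext.mk₀_bijective _ _).1 hy
  exact ⟨y'.hom, fun x => LinearMap.congr_fun (congrArg ModuleCat.Hom.hom this) x⟩

open CategoryTheory.Abelian in
lemma EV.shift {K P N : ModuleCat.{u} R} {f : K →ₗ[R] P} {g : P →ₗ[R] N}
    (h : IsSES f g) [Module.Projective R P] {n : ℕ} (hN : EV (n+2) N) : EV (n+1) K := by
  obtain ⟨w, hS⟩ := h.shortExact
  have : Subsingleton (Ext.{u} N (ModuleCat.of R R) (n+2)) := hN
  have hP : CategoryTheory.Projective P := (IsProjective.iff_projective P).1 inferInstance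
  refine ⟨fun x y => sub_eq_zero.1 ?_⟩
  obtain ⟨z, hz⟩ := Ext.contravariant_sequence_exact₁ hS (ModuleCat.of R R)
    (x - y) (n₁ := n+2) (by omega) (this.elim _ _)
  rw [← hz, Ext.eq_zero_of_projective z, Ext.comp_zero]

lemma D_ses [IsNoetherianRing R] (n : ℕ) {K' K K'' : ModuleCat.{u} R} (i : K' →ₗ[R] K)
    (π : K →ₗ[R] K'') (hs : IsSES i π) [Module.Finite R K'] [Module.Finite R K'']
    (hext : n = 0 → ∀ φ : K' →ₗ[R] R, ∃ ψ : K →ₗ[R] R, ∀ x, ψ (i x) = φ x)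
    (hev : n ≠ 0 → EV n K') :
    ∃ (T'' T T' : ModuleCat.{u} R) (p : T'' →ₗ[R] T) (q : T →ₗ[R] T'),
      IsD n K'' T'' ∧ IsD n K T ∧ IsD n K' T' ∧ IsSES p q := by
  induction n generalizing K' K K'' with
  | zero => exact tr_ses_s17 i π hs (hext rfl)
  | succ n ih =>
    obtain ⟨N', P', f', e', _, hP'1, hP'2, h'⟩ := exists_cover K'
    obtain ⟨N'', P'', f'', e'', _, hP''1, hP''2, h''⟩ := exists_cover K''
    obtain ⟨N, f, e, j, r, hfe, hjr, he0, hπe, hfj, hfr⟩ := horseshoe_s17 i π hs f' e' h' f'' e'' h''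
    obtain ⟨T'', T, T', p, q, h1, h2, h3, h4⟩ := ih j r hjr (by
      rintro rfl φ
      obtain ⟨ψ, hψ⟩ := EV.extend h' (hev (by simp)) φ
      refine ⟨ψ ∘ₗ LinearMap.fst R P' P'' ∘ₗ f, fun x => ?_⟩
      rw [← hψ, LinearMap.comp_apply, LinearMap.comp_apply, hfj]
      rfl) (by
      intro hn
      obtain ⟨m, rfl⟩ := Nat.exists_eq_succ_of_ne_zero hn
      exact EV.shift h' (hev (by simp)))
    refine ⟨T'', T, T', p, q, ⟨N'', P'', f'', e'', hP''1, hP''2, h'', h1⟩,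
      ⟨N, _, f, e, ?_, ?_, hfe, h2⟩, ⟨N', P', f', e', hP'1, hP'2, h', h3⟩, h4⟩
    · exact inferInstanceAs (Module.Finite R (P' × P''))
    · exact inferInstanceAs (Module.Free R (P' × P''))

lemma D_ses' [IsNoetherianRing R] (n : ℕ) {K' K K'' : ModuleCat.{u} R} (i : K' →ₗ[R] K)
    (π : K →ₗ[R] K'') (hs : IsSES i π) [Module.Finite R K'] [Module.Finite R K'']
    (hev : EV n K') :
    ∃ (T'' T T' : ModuleCat.{u} R) (p : T'' →ₗ[R] T) (q : T →ₗ[R] T'),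
      IsD n K'' T'' ∧ IsD n K T ∧ IsD n K' T' ∧ IsSES p q :=
  D_ses n i π hs (by
    rintro rfl φ
    exact ⟨0, fun x => by rw [EV.zero hev φ]; rfl⟩) (fun _ => hev)

/-- Modules whose first syzygy lies in `𝒳`. -/
def Sh (𝒳 : Set (ModuleCat.{u} R)) : Set (ModuleCat.{u} R) :=
  {M | Module.Finite R M ∧ ∃ (K P : ModuleCat.{u} R) (f : K →ₗ[R] P) (g : P →ₗ[R] M),
    Module.Finite R P ∧ Module.Projective R P ∧ IsSES f g ∧ K ∈ 𝒳}

lemma subset_Sh [IsNoetherianRing R] {𝒳 : Set (ModuleCat.{u} R)} (h : IsResolving R 𝒳) :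
    𝒳 ⊆ Sh 𝒳 := by
  intro M hM
  have hf := h.fg M hM
  obtain ⟨K, P, f, g, h1, h2, h3, h4⟩ := exists_cover M
  exact ⟨hf, K, P, f, g, h2, inferInstance, h4,
    h.syzygy_closed K P M f g h4 h1 h2 inferInstance hM⟩

lemma Sh_resolving [IsNoetherianRing R] {𝒳 : Set (ModuleCat.{u} R)} (h : IsResolving R 𝒳) :
    IsResolving R (Sh 𝒳) where
  fg M hM := hM.1
  iso_closed := by
    rintro M N ⟨E⟩ ⟨hf, K, P, f, g, h1, h2, h3, h4⟩
    refine ⟨Module.Finite.equiv E, K, P, f, E.toLinearMap ∘ₗ g, h1, h2,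
      ⟨h3.1, E.surjective.comp h3.2.1, ?_⟩, h4⟩
    rw [h3.2.2]; ext x; simp
  proj_mem M hf hp := subset_Sh h (h.proj_mem M hf hp)
  summand_closed := by
    rintro M N ⟨hf, K, P, f, g, h1, h2, h3, h4⟩
    have hfM : Module.Finite R M :=
      Module.Finite.of_surjective (LinearMap.fst R M N) LinearMap.fst_surjective
    obtain ⟨K1, P1, f1, g1, a1, a2, a3, a4⟩ := exists_cover M
    refine ⟨hfM, K1, P1, f1, g1, a2, inferInstance, a4, stRet_mem h ?_ h4⟩
    refine stRet_syz f1 g1 f g a4 h3 ?_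
    exact ⟨LinearMap.inl R M N, LinearMap.fst R M N, ModuleCat.of R PUnit.{u+1}, 0, 0,
      inferInstanceAs (Module.Finite R PUnit.{u+1}),
      inferInstanceAs (Module.Projective R PUnit.{u+1}), by intro x; simp⟩
  ext_closed := by
    rintro A B C i π hs ⟨hfA, K, P, f, g, h1, h2, h3, h4⟩ ⟨hfC, K2, P2, f2, g2, a1, a2, a3, a4⟩
    obtain ⟨N, f', e', j, r, hfe, hjr, -⟩ := horseshoe_s17 i π hs f g h3 f2 g2 a3
    have hfin : Module.Finite R (ModuleCat.of R (P × P2)) :=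
      inferInstanceAs (Module.Finite R (P × P2))
    refine ⟨Module.Finite.of_surjective e' hfe.2.1, N, _, f', e', hfin,
      inferInstanceAs (Module.Projective R (P × P2)), hfe, h.ext_closed _ _ _ j r hjr h4 a4⟩
  syzygy_closed := by
    rintro K P M f g hs hK hP hPp ⟨hf, K2, P2, f2, g2, a1, a2, a3, a4⟩
    exact subset_Sh h (stRet_mem h (stRet_syz f g f2 g2 hs a3
      (stRet_of_equiv M M (LinearEquiv.refl R M))) a4)

/-- If the middle term lies in `𝒳` and a syzygy of the right one does, so does the left one. -/
lemma left_mem {𝒳 : Set (ModuleCat.{u} R)} (h : IsResolving R 𝒳) {A B C : ModuleCat.{u} R}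
    (f : A →ₗ[R] B) (g : B →ₗ[R] C) (hs : IsSES f g) (hB : B ∈ 𝒳) (hC : C ∈ Sh 𝒳) : A ∈ 𝒳 := by
  obtain ⟨-, K, P, i, p, h1, h2, h3, h4⟩ := hC
  obtain ⟨s, hs'⟩ := Module.projective_lifting_property g p hs.2.1
  replace hs' : ∀ x, g (s x) = p x := LinearMap.congr_fun hs'
  obtain ⟨τ, hτ⟩ := lift_inj f hs.1 (s ∘ₗ i) (by
    intro x; rw [hs.2.2]; simp [hs', comp_zero_of_ses h3.2.2])
  replace hτ : ∀ x, f (τ x) = s (i x) := hτ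
  refine h.summand_closed A P (h.ext_closed K (ModuleCat.of R (A × P)) B
    (LinearMap.prod (-τ) i) (LinearMap.coprod f s) ⟨?_, ?_, range_eq_ker_of ?_ ?_⟩ h4 hB)
  · intro x y hxy
    exact h3.1 (congrArg Prod.snd hxy)
  · intro b
    obtain ⟨y, hy⟩ := h3.2.1 (g b)
    obtain ⟨a, ha⟩ := mem_range_of_ses hs.2.2 (x := b - s y) (by simp [hs', hy])
    exact ⟨(a, y), by simp [ha]⟩
  · intro x
    simp [hτ]
  · rintro ⟨a, y⟩ hay
    have hay : f a + s y = 0 := by simpa using hay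
    obtain ⟨k, rfl⟩ := mem_range_of_ses h3.2.2 (x := y) (by
      rw [← hs']
      have := congrArg g hay
      simpa [comp_zero_of_ses hs.2.2] using this)
    refine ⟨k, Prod.ext (hs.1 ?_) rfl⟩
    rw [← hτ] at hay
    change f (-τ k) = f a
    rw [map_neg]
    exact (eq_neg_of_add_eq_zero_left hay).symm

lemma good_base [IsNoetherianRing R] {𝒳 : Set (ModuleCat.{u} R)} (h : IsResolving R 𝒳)
    {L : ModuleCat.{u} R} [Module.Finite R L] (hev : EV 0 L) : Good (Sh 𝒳) 0 L := by
  obtain ⟨K, P, f, g, _, _, _, hfg⟩ := exists_cover L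
  obtain ⟨K1, P1, f1, g1, _, _, _, hfg1⟩ := exists_cover K
  have ht := isTr_mk (f ∘ₗ g1) g hfg.2.1 (exact_comp hfg1 hfg)
  refine ⟨_, ht, IsTr.finite ht, ModuleCat.of R (Module.Dual R P), ModuleCat.of R (Module.Dual R P1),
    (f ∘ₗ g1).dualMap, Submodule.mkQ _, inferInstanceAs (Module.Finite R (Module.Dual R P1)),
    inferInstanceAs (Module.Projective R (Module.Dual R P1)),
    ⟨?_, Submodule.mkQ_surjective _, (Submodule.ker_mkQ _).symm⟩, h.proj_mem _
      (inferInstanceAs (Module.Finite R (Module.Dual R P)))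
      (inferInstanceAs (Module.Projective R (Module.Dual R P)))⟩
  rw [injective_iff_map_eq_zero]
  intro φ hφ
  replace hφ : ∀ x, φ (f (g1 x)) = 0 := LinearMap.congr_fun hφ
  obtain ⟨ψ, hψ⟩ := lift_surj g hfg.2.1 φ (by
    intro x hx
    obtain ⟨y, rfl⟩ := mem_range_of_ses hfg.2.2 hx
    obtain ⟨z, rfl⟩ := hfg1.2.1 y
    exact hφ z)
  apply LinearMap.ext
  intro x
  rw [← hψ, EV.zero hev ψ]; rfl

lemma good_step [IsNoetherianRing R] {𝒳 : Set (ModuleCat.{u} R)} (h : IsResolving R 𝒳) (n : ℕ)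
    {L : ModuleCat.{u} R} [Module.Finite R L] (hev : EV (n+1) L) (hg : Good 𝒳 n L) :
    Good (Sh 𝒳) (n+1) L := by
  induction n generalizing L with
  | zero =>
    obtain ⟨K, P, f, g, _, hP1, hP2, hfg⟩ := exists_cover L
    obtain ⟨K1, P1, f1, g1, _, _, _, hfg1⟩ := exists_cover K
    obtain ⟨K2, P2, f2, g2, _, _, _, hfg2⟩ := exists_cover K1
    have htN := isTr_mk (f ∘ₗ g1) g hfg.2.1 (exact_comp hfg1 hfg)
    have ht := isTr_mk (f1 ∘ₗ g2) g1 hfg1.2.1 (exact_comp hfg2 hfg1)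
    have hTN := Good.mem h hg (stRet_of_equiv L L (LinearEquiv.refl R L)) htN
    obtain ⟨p, hp⟩ := lift_surj (Submodule.mkQ (LinearMap.range (f ∘ₗ g1).dualMap))
      (Submodule.mkQ_surjective _) (f1 ∘ₗ g2).dualMap (by
        intro φ hφ
        obtain ⟨ψ, rfl⟩ := (Submodule.Quotient.mk_eq_zero _).1 hφ
        apply LinearMap.ext
        intro x
        simp [comp_zero_of_ses hfg1.2.2])
    refine ⟨_, ⟨K, P, f, g, hP1, hP2, hfg, ht⟩, IsTr.finite ht, _,
      ModuleCat.of R (Module.Dual R P2), p, Submodule.mkQ _,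
      inferInstanceAs (Module.Finite R (Module.Dual R P2)),
      inferInstanceAs (Module.Projective R (Module.Dual R P2)),
      ⟨?_, Submodule.mkQ_surjective _, ?_⟩, hTN⟩
    · rw [injective_iff_map_eq_zero]
      intro y hy
      obtain ⟨φ, rfl⟩ := Submodule.mkQ_surjective _ y
      rw [hp] at hy
      replace hy : ∀ x, φ (f1 (g2 x)) = 0 := LinearMap.congr_fun hy
      obtain ⟨θ, hθ⟩ := lift_surj g1 hfg1.2.1 φ (by
        intro x hx
        obtain ⟨y, rfl⟩ := mem_range_of_ses hfg1.2.2 hx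
        obtain ⟨z, rfl⟩ := hfg2.2.1 y
        exact hy z)
      obtain ⟨ψ, hψ⟩ := EV.extend hfg hev θ
      refine (Submodule.Quotient.mk_eq_zero _).2 ⟨ψ, ?_⟩
      apply LinearMap.ext
      intro x
      rw [← hθ, ← hψ]; rfl
    · rw [Submodule.ker_mkQ]
      ext y
      constructor
      · rintro ⟨z, rfl⟩
        obtain ⟨φ, rfl⟩ := Submodule.mkQ_surjective _ z
        exact ⟨φ, (hp φ).symm⟩
      · rintro ⟨φ, rfl⟩
        exact ⟨_, hp φ⟩
  | succ n ih =>
    obtain ⟨T, ⟨K, P, f, g, hP1, hP2, hfg, hT⟩, hm⟩ := hg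
    have hK : Module.Finite R K := Module.Finite.of_injective f hfg.1
    obtain ⟨T', hT', hm'⟩ := ih (EV.shift hfg hev) ⟨T, hT, hm⟩
    exact ⟨T', ⟨K, P, f, g, hP1, hP2, hfg, hT'⟩, hm'⟩

lemma Sh_iter_resolving [IsNoetherianRing R] (m : ℕ) {𝒳 : Set (ModuleCat.{u} R)}
    (h : IsResolving R 𝒳) : IsResolving R (Sh^[m] 𝒳) := by
  induction m with
  | zero => exact h
  | succ m ih => rw [Function.iterate_succ_apply']; exact Sh_resolving ih

lemma good_iter [IsNoetherianRing R] (n : ℕ) {𝒳 : Set (ModuleCat.{u} R)} (h : IsResolving R 𝒳)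
    {L : ModuleCat.{u} R} [Module.Finite R L] (hev : ∀ i ≤ n, EV i L) :
    Good (Sh^[n+1] 𝒳) n L := by
  induction n with
  | zero => exact good_base h (hev 0 le_rfl)
  | succ n ih =>
    rw [Function.iterate_succ_apply']
    exact good_step (Sh_iter_resolving _ h) n (hev _ le_rfl) (ih fun i hi => hev i (by omega))


lemma simple_equiv_residue [IsLocalRing R] (M : Type u) [AddCommGroup M] [Module R M]
    [h : IsSimpleModule R M] : Nonempty (M ≃ₗ[R] residueMod R) := by
  obtain ⟨I, hI, ⟨e⟩⟩ := isSimpleModule_iff_quot_maximal.mp h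
  obtain rfl := IsLocalRing.eq_maximalIdeal hI
  exact ⟨e⟩

lemma support_residue [IsLocalRing R] : Module.support R (residueMod R) ⊆
    PrimeSpectrum.zeroLocus (IsLocalRing.maximalIdeal R : Set R) := by
  have := Module.support_quotient (R := R) (M := R) (IsLocalRing.maximalIdeal R)
  exact (Module.support_eq_zeroLocus (R := R) (M := R ⧸ IsLocalRing.maximalIdeal R) ▸
    (by rw [Ideal.annihilator_quotient]))

lemma finite_residue [IsLocalRing R] : Module.Finite R (residueMod R) :=
  inferInstanceAs (Module.Finite R (R ⧸ IsLocalRing.maximalIdeal R))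

lemma support_finlen [IsLocalRing R] {M : Type u} [AddCommGroup M] [Module R M]
    (h : IsFiniteLength R M) : Module.support R M ⊆
    PrimeSpectrum.zeroLocus (IsLocalRing.maximalIdeal R : Set R) := by
  induction h with
  | of_subsingleton => simp [Module.support_eq_empty]
  | @of_simple_quotient M _ _ N hs hN ih =>
    obtain ⟨e⟩ := simple_equiv_residue (R := R) (M ⧸ N)
    rw [Module.support_of_exact (f := N.subtype) (g := N.mkQ) (LinearMap.exact_subtype_mkQ N)
      N.injective_subtype N.mkQ_surjective, e.support_eq]
    exact Set.union_subset ih support_residue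

lemma finite_finlen {M : Type u} [AddCommGroup M] [Module R M]
    (h : IsFiniteLength R M) : Module.Finite R M := by
  have := (isFiniteLength_iff_isNoetherian_isArtinian.1 h).1
  infer_instance

lemma ev_finlen [IsNoetherianRing R] [IsLocalRing R] {t : ℕ}
    (hdepth : depthE R (IsLocalRing.maximalIdeal R) R = (t : ℕ∞)) {L : ModuleCat.{u} R}
    (hlen : IsFiniteLength R L) {i : ℕ} (hi : i < t) : EV i L := by
  have h1 : (i : ℕ∞) < depthE R (IsLocalRing.maximalIdeal R) R := by
    rw [hdepth]; exact_mod_cast hi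
  obtain ⟨x, ⟨rs, hm, hr, rfl⟩, hx⟩ := lt_sSup_iff.1 h1
  have hx' : i < rs.length := by exact_mod_cast hx
  have := finite_finlen hlen
  have hreg : RingTheory.Sequence.IsRegular R rs :=
    (IsLocalRing.isRegular_iff_isWeaklyRegular_of_subset_maximalIdeal hm).2 hr
  exact ModuleCat.subsingleton_ext_of_exists_isRegular (IsLocalRing.maximalIdeal R) L
    (support_finlen hlen) (ModuleCat.of R R) (by
      have h : IsLocalRing.maximalIdeal R • (⊤ : Submodule R R) < ⊤ := by
        rw [smul_eq_mul, Ideal.mul_top]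
        exact lt_top_iff_ne_top.2 (IsLocalRing.maximalIdeal.isMaximal R).ne_top
      exact h) rs hm hreg i hx'

lemma isSES_sub (M : Type u) [AddCommGroup M] [Module R M] (N : Submodule R M) :
    IsSES N.subtype N.mkQ :=
  ⟨N.injective_subtype, N.mkQ_surjective, by simp⟩

lemma good_finlen [IsNoetherianRing R] [IsLocalRing R] {t : ℕ}
    (hdepth : depthE R (IsLocalRing.maximalIdeal R) R = (t : ℕ∞)) {n : ℕ} (hn : n < t)
    {𝒳 : Set (ModuleCat.{u} R)} (h : IsResolving R 𝒳) (hk : Good 𝒳 n (residueMod R))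
    {M : Type u} [AddCommGroup M] [Module R M] (hM : IsFiniteLength R M) :
    Good 𝒳 n (ModuleCat.of R M) := by
  induction hM with
  | @of_subsingleton M _ _ _ =>
    obtain ⟨T, hT⟩ := exists_isD (R := R) n (ModuleCat.of R M)
    exact ⟨T, hT, hk.mem h (stRet_of_subsingleton _ _) hT⟩
  | @of_simple_quotient M _ _ N hs hN ih =>
    obtain ⟨e⟩ := simple_equiv_residue (R := R) (M ⧸ N)
    have f1 : Module.Finite R (ModuleCat.of R N) := finite_finlen hN
    have f2 : Module.Finite R (ModuleCat.of R (M ⧸ N)) :=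
      inferInstanceAs (Module.Finite R (M ⧸ N))
    obtain ⟨T'', T, T', p, q, h1, h2, h3, h4⟩ := D_ses' n (K' := ModuleCat.of R N)
      (K := ModuleCat.of R M) (K'' := ModuleCat.of R (M ⧸ N)) N.subtype N.mkQ (isSES_sub M N)
      (ev_finlen hdepth (L := ModuleCat.of R N) hN hn)
    exact ⟨T, h2, h.ext_closed _ _ _ p q h4
      (hk.mem h (stRet_of_equiv (ModuleCat.of R (M ⧸ N)) (residueMod R) e) h1)
      (ih.mem h (stRet_of_equiv _ _ (LinearEquiv.refl R _)) h3)⟩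

lemma good_descend [IsNoetherianRing R] [IsLocalRing R] {t : ℕ}
    (hdepth : depthE R (IsLocalRing.maximalIdeal R) R = (t : ℕ∞)) {n : ℕ} (hn : n < t)
    {M : Type u} [AddCommGroup M] [Module R M] [Nontrivial M] (hM : IsFiniteLength R M) (s : ℕ) :
    ∀ {𝒳 : Set (ModuleCat.{u} R)} (_ : IsResolving R 𝒳) (_ : Good 𝒳 n (ModuleCat.of R M))
      (_ : Good (Sh^[s] 𝒳) n (residueMod R)), Good 𝒳 n (residueMod R) := by
  induction s with
  | zero => intro 𝒳 _ _ h; exact h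
  | succ s ih =>
    intro 𝒳 h hL hk
    rw [Function.iterate_succ_apply] at hk
    have hk' : Good (Sh 𝒳) n (residueMod R) := ih (Sh_resolving h)
      (by obtain ⟨T, h1, h2⟩ := hL; exact ⟨T, h1, subset_Sh h h2⟩) hk
    cases hM with
    | of_subsingleton => exact absurd ‹Nontrivial M› (not_nontrivial M)
    | @of_simple_quotient _ _ _ N hs hN =>
      obtain ⟨e⟩ := simple_equiv_residue (R := R) (M ⧸ N)
      have f1 : Module.Finite R (ModuleCat.of R N) := finite_finlen hN
      have f2 : Module.Finite R (ModuleCat.of R (M ⧸ N)) :=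
        inferInstanceAs (Module.Finite R (M ⧸ N))
      obtain ⟨T'', T, T', p, q, h1, h2, h3, h4⟩ := D_ses' n (K' := ModuleCat.of R N)
        (K := ModuleCat.of R M) (K'' := ModuleCat.of R (M ⧸ N)) N.subtype N.mkQ (isSES_sub M N)
        (ev_finlen hdepth (L := ModuleCat.of R N) hN hn)
      have hT : T'' ∈ 𝒳 := left_mem h p q h4
        (hL.mem h (stRet_of_equiv _ _ (LinearEquiv.refl R _)) h2)
        ((good_finlen hdepth hn (Sh_resolving h) hk' hN).mem (Sh_resolving h)
          (stRet_of_equiv _ _ (LinearEquiv.refl R _)) h3)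
      have f3 : Module.Finite R (residueMod R) := finite_residue
      obtain ⟨S, hS⟩ := exists_isD (R := R) n (residueMod R)
      have hG : Good 𝒳 n (ModuleCat.of R (M ⧸ N)) := ⟨T'', h1, hT⟩
      exact ⟨S, hS, hG.mem h (stRet_of_equiv (residueMod R) (ModuleCat.of R (M ⧸ N)) e.symm) hS⟩

lemma simple_finlen (M : Type u) [AddCommGroup M] [Module R M] [IsSimpleModule R M] :
    IsFiniteLength R M :=
  have hf : Module.Finite R M := inferInstance
  ((IsSemisimpleModule.finite_tfae (R := R) (M := M)).out 0 3).mp hf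

lemma residue_finlen [IsLocalRing R] : IsFiniteLength R (residueMod R) := by
  have : IsSimpleModule R (R ⧸ IsLocalRing.maximalIdeal R) :=
    isSimpleModule_iff_quot_maximal.2 ⟨_, IsLocalRing.maximalIdeal.isMaximal R,
      ⟨LinearEquiv.refl R _⟩⟩
  exact @simple_finlen R _ (R ⧸ IsLocalRing.maximalIdeal R) _ _ this

end Helpers

/-- Proposition 2.6: over a local ring of depth `t > 0`, for a nonzero module `L` of
finite length and `0 ≤ n < t` one has `res (Tr Ω^n L) = res (Tr Ω^n k)`. -/
theorem resClosure_trOmega_finite_length [IsNoetherianRing R] [IsLocalRing R]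
    (t : ℕ) (hdepth : depthE R (IsLocalRing.maximalIdeal R) R = (t : ℕ∞)) (htpos : 0 < t)
    (L : ModuleCat.{u} R) (hL : Nontrivial L) (hlen : IsFiniteLength R L)
    (n : ℕ) (hn : n < t)
    (T T' : ModuleCat.{u} R)
    (hT : IsTrOmega R n L T) (hT' : IsTrOmega R n (residueMod R) T') :
    resClosure R {T} = resClosure R {T'} := by
  have hD := isD_of_isTrOmega hT
  have hD' := isD_of_isTrOmega hT'
  have key : ∀ 𝒳 : Set (ModuleCat.{u} R), IsResolving R 𝒳 → (T ∈ 𝒳 ↔ T' ∈ 𝒳) := by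
    intro 𝒳 h
    constructor
    · intro hm
      have f3 : Module.Finite R (residueMod R) := finite_residue
      have hG : Good 𝒳 n (residueMod R) := good_descend hdepth hn hlen (n + 1) h ⟨T, hD, hm⟩
        (good_iter n h fun i hi => ev_finlen hdepth residue_finlen (lt_of_le_of_lt hi hn))
      exact hG.mem h (stRet_of_equiv _ _ (LinearEquiv.refl R _)) hD'
    · intro hm
      exact (good_finlen hdepth hn h ⟨T', hD', hm⟩ hlen).mem h
        (stRet_of_equiv L (ModuleCat.of R L) (LinearEquiv.refl R _)) hD
  unfold resClosure
  congr 1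
  ext 𝒳
  simp only [Set.mem_ofPred_eq, Set.singleton_subset_iff]
  exact and_congr_right (key 𝒳)

end ResolvPaper
end
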